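/- arXiv:2306.03720 — 2 statements merged into one kernel-verified Lean document; each statement's English description precedes it below -/
import Mathlib

section
/- Assume d ≥ 2, k ∈ {1,…,d−1}, and 2 < p < 2k/(k−1) (where 2k/(k−1) := ∞ if k = 1). Let (g_ε) be (s,γ)-admissible for some s > d/(d+1) and γ > 1. Then there exist constants 0 < c' ≤ C' < ∞ and thresholds ε₀, δ₀, m₀ ∈ (0,1/2], depending only on d, k, p, s, γ and the admissibility constants, with the following property: for all ε ∈ (0,ε₀), δ ∈ (0,δ₀), m ∈ (0,m₀], and every nonnegative measurable a : (0,∞) → [0,∞) with ∫_0^m a(t)² dt < ∞, the function v ∈ L²(ℝ^d) defined by v̂(ξ) = 1_{||ξ|−1| ≤ m} · 1_{C^k_δ}(ξ/|ξ|) · a(||ξ|−1|) satisfies c' δ^{d−k} ∫_0^m a(t)²(ε+t^γ) dt ≤ q_ε(v) ≤ C' δ^{d−k} ∫_0^m a(t)²(ε+t^γ) dt and ‖v‖_{L^p(ℝ^d)} ≥ c' δ^{(d−k)(1−1/p)} (δ²+m)^{(k−1)/2 − k/p} ∫_0^m a(t) dt. -/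
open MeasureTheory Real Filter
open scoped ENNReal FourierTransform RealInnerProductSpace Topology

noncomputable section

/-- Euclidean space `ℝ^d`. -/
abbrev Rd (d : ℕ) : Type := EuclideanSpace ℝ (Fin d)

/-- `U` is the (distributional, hence `L²`-) Fourier transform of `u`:
it pairs against Schwartz functions the way the Fourier transform of `u` must. -/
def IsFT {d : ℕ} (U u : Rd d → ℂ) : Prop :=
  ∀ φ : SchwartzMap (Rd d) ℂ, ∫ ξ, U ξ * φ ξ = ∫ x, u x * 𝓕 (⇑φ) x

/-- An element of `H^s(ℝ^d)`: an `L²` function `toFun` together with its Fourier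
transform `ft`, satisfying the `H^s` integrability condition. -/
structure HsFn (d : ℕ) (s : ℝ) where
  toFun : Rd d → ℂ
  ft : Rd d → ℂ
  memL2 : MemLp toFun 2 volume
  ft_memL2 : MemLp ft 2 volume
  isFT : IsFT ft toFun
  memHs : Integrable (fun ξ : Rd d => ‖ft ξ‖ ^ 2 * (1 + ‖ξ‖ ^ 2) ^ s) volume

/-- The quadratic form `q_ε(u) = ∫ |û(ξ)|² g(|ξ|) dξ` (for a fixed symbol `g`). -/
def qeps {d : ℕ} {s : ℝ} (g : ℝ → ℝ) (u : HsFn d s) : ℝ :=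
  ∫ ξ : Rd d, ‖u.ft ξ‖ ^ 2 * g ‖ξ‖

/-- The `L^p` norm (as a real number). -/
def LpN {d : ℕ} (p : ℝ) (f : Rd d → ℂ) : ℝ :=
  (eLpNorm f (ENNReal.ofReal p) volume).toReal

/-- The set of values of the Rayleigh quotient `q_ε(u)/‖u‖_p²` over nonzero
`u ∈ H^s` satisfying the symmetry constraint `P`. -/
def RayleighSet (d : ℕ) (s p : ℝ) (g : ℝ → ℝ) (P : (Rd d → ℂ) → Prop) : Set ℝ :=
  {t | ∃ u : HsFn d s, P u.toFun ∧ ¬ u.toFun =ᵐ[volume] (fun _ => (0 : ℂ)) ∧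
      MemLp u.toFun (ENNReal.ofReal p) volume ∧
      t = qeps g u / LpN p u.toFun ^ 2}

/-- The Rayleigh quotient infimum. -/
def Rayleigh (d : ℕ) (s p : ℝ) (g : ℝ → ℝ) (P : (Rd d → ℂ) → Prop) : ℝ :=
  sInf (RayleighSet d s p g P)

/-- The Rayleigh quotient infimum is attained. -/
def Attained (d : ℕ) (s p : ℝ) (g : ℝ → ℝ) (P : (Rd d → ℂ) → Prop) : Prop :=
  ∃ u : HsFn d s, P u.toFun ∧ ¬ u.toFun =ᵐ[volume] (fun _ => (0 : ℂ)) ∧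
      MemLp u.toFun (ENNReal.ofReal p) volume ∧
      qeps g u / LpN p u.toFun ^ 2 = Rayleigh d s p g P

/-- A radial function. -/
def Radial {d : ℕ} (f : Rd d → ℂ) : Prop := ∀ x y : Rd d, ‖x‖ = ‖y‖ → f x = f y

/-- The squared norm of the first block of coordinates (the first `d - k` ones),
under the identification `ℝ^d = ℝ^{d-k} × ℝ^k`. -/
def blockSq (d k : ℕ) (x : Rd d) : ℝ := ∑ i : Fin d, if (i : ℕ) < d - k then x i ^ 2 else 0

/-- A `G_k = O(d-k) × O(k)`-symmetric function: it depends only on the norms of the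
two blocks of coordinates. -/
def GkSymmetric (d k : ℕ) (f : Rd d → ℂ) : Prop :=
  ∀ x y : Rd d, blockSq d k x = blockSq d k y → ‖x‖ = ‖y‖ → f x = f y

/-- An `(s,γ)`-admissible family of symbols, with admissibility constants `c, C`. -/
def IsAdmissible (s γ c C : ℝ) (g : ℝ → ℝ → ℝ) : Prop :=
  (∀ ε ∈ Set.Ioo (0:ℝ) 1, Measurable (g ε)) ∧
  (∀ ε ∈ Set.Ioo (0:ℝ) 1, ∀ r : ℝ, 0 < g ε r) ∧
  (∀ ε ∈ Set.Ioo (0:ℝ) 1, ∀ r : ℝ, 1/2 ≤ |r - 1| →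
      c * (1 + |r| ^ (2*s)) ≤ g ε r ∧ g ε r ≤ C * (1 + |r| ^ (2*s))) ∧
  (∀ ε ∈ Set.Ioo (0:ℝ) 1, ∀ r : ℝ, |r - 1| ≤ 1/2 →
      c * (ε + |r - 1| ^ γ) ≤ g ε r ∧ g ε r ≤ C * (ε + |r - 1| ^ γ))

/-- The `G_k`-symmetric Stein–Tomas exponent `2_⋆^k`. -/
def twoStarK (d k : ℕ) : ℝ :=
  2 * ((d : ℝ) + (min k (d - k) : ℕ)) / ((d : ℝ) - 2 + (min k (d - k) : ℕ))

/-- The interpolation parameter `α_k`. -/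
def alphaK (d k : ℕ) (p : ℝ) : ℝ := (1/2 - 1/p) / (1/2 - 1/twoStarK d k)

/-- The spherical shell `A_{ε,δ}` around the unit sphere (with `I_{ε,δ}` scale `ε^{1/γ}`). -/
def Aset (d : ℕ) (γ ε δ : ℝ) : Set (Rd d) :=
  {ξ | δ * ε ^ (1/γ) ≤ |‖ξ‖ - 1| ∧ |‖ξ‖ - 1| ≤ δ⁻¹ * ε ^ (1/γ)}

/-- The Knapp-type `G_k`-symmetric trial function on the Fourier side:
`V(ξ) = 1_{||ξ|-1| ≤ m} · 1_{C^k_δ}(ξ/|ξ|) · a(||ξ|-1|)`  (the cap condition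
`|first block of ξ/|ξ|| < δ` being written as `blockSq ξ < δ²|ξ|²`). -/
def knappFT (d k : ℕ) (m δ : ℝ) (a : ℝ → ℝ) : Rd d → ℂ := fun ξ =>
  if |‖ξ‖ - 1| ≤ m ∧ blockSq d k ξ < δ ^ 2 * ‖ξ‖ ^ 2 then ((a |‖ξ‖ - 1| : ℝ) : ℂ) else 0

/-!
The bounds on the quadratic form are polar coordinates: the cone over the cap meets the unit ball
in volume comparable to `δ ^ (d - k)`, and near the unit sphere the radial Jacobian is bounded
above and below.

For the `L^p` bound put `ρ = δ ^ 2 + m` and test `|v| ^ 2` against the Gaussian of width `1 / δ`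
along the first block and `1 / ρ` along the second. By Hölder, the pairing is at most `‖v‖_p ^ 2`
times the Gaussian's norm. On the Fourier side it is a quadratic form in `v̂ ≥ 0` with a positive
kernel that is bounded below on pairs of frequencies lying in a common box of size
`δ ^ (d - k) × ρ ^ k`. Within a fixed angle of one axis of the second block, the support of `v̂` is
covered by about `ρ ^ (-(k - 1))` such boxes, because the sphere is there a graph over the other
coordinates; restricting the form to pairs in the same box, Cauchy–Schwarz bounds it below by
`ρ ^ (k - 1)` times the square of the mass of `v̂`.
-/

section Cone

variable {E : Type*} [NormedAddCommGroup E]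

/-- The closed shell of half-width `m` around the unit sphere. -/
def unitShell (m : ℝ) : Set E := {ξ | |‖ξ‖ - 1| ≤ m}

lemma norm_le_of_mem_unitShell {m : ℝ} {ξ : E} (hξ : ξ ∈ unitShell m) : ‖ξ‖ ≤ 1 + m := by
  have h : |‖ξ‖ - 1| ≤ m := hξ
  linarith [(abs_le.1 h).2]

lemma le_norm_of_mem_unitShell {m : ℝ} {ξ : E} (hξ : ξ ∈ unitShell m) : 1 - m ≤ ‖ξ‖ := by
  have h : |‖ξ‖ - 1| ≤ m := hξ
  linarith [(abs_le.1 h).1]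

lemma measurableSet_unitShell [MeasurableSpace E] [BorelSpace E] (m : ℝ) :
    MeasurableSet (unitShell m : Set E) :=
  measurableSet_le (by fun_prop) measurable_const

variable [NormedSpace ℝ E]

/-- A set invariant under all positive dilations; it is not assumed convex and may or may not
contain the origin. -/
def IsDilationInvariant (K : Set E) : Prop :=
  ∀ ⦃t : ℝ⦄, 0 < t → ∀ ξ : E, t • ξ ∈ K ↔ ξ ∈ K

variable [MeasurableSpace E] [BorelSpace E] [FiniteDimensional ℝ E] [Nontrivial E]
  (μ : Measure E) [μ.IsAddHaarMeasure] {K : Set E} {A : Set ℝ} {H : ℝ → ℝ} {m : ℝ}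

lemma measure_inter_norm_preimage_eq_toSphere_mul (hK : IsDilationInvariant K)
    (hKm : MeasurableSet K) (hA : MeasurableSet A) :
    μ (K ∩ norm ⁻¹' A) = μ.toSphere (Subtype.val ⁻¹' K) *
      Measure.volumeIoiPow (Module.finrank ℝ E - 1) (Subtype.val ⁻¹' A) := by
  have polar_preimage : (Subtype.val ⁻¹' (K ∩ norm ⁻¹' A) : Set ({0}ᶜ : Set E)) =
      homeomorphUnitSphereProd E ⁻¹' ((Subtype.val ⁻¹' K) ×ˢ (Subtype.val ⁻¹' A)) := by
    ext x
    simp [hK (inv_pos.2 (norm_pos_iff.2 x.2))]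
  rw [← Measure.prod_prod,
    ← μ.measurePreserving_homeomorphUnitSphereProd.measure_preimage
      ((measurable_subtype_coe hKm).prod (measurable_subtype_coe hA)).nullMeasurableSet,
    ← polar_preimage, comap_subtype_coe_apply (measurableSet_singleton _).compl,
    Subtype.image_preimage_coe, Set.inter_comm _ (K ∩ _),
    ← Measure.restrict_apply (hKm.inter (measurable_norm hA)), restrict_compl_singleton]

lemma toSphere_preimage_val_eq_finrank_mul (hK : IsDilationInvariant K) (hKm : MeasurableSet K) :
    μ.toSphere (Subtype.val ⁻¹' K) = Module.finrank ℝ E * μ (K ∩ Metric.ball 0 1) := by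
  have hpos : 0 < Module.finrank ℝ E := Module.finrank_pos
  have ball_eq : (Metric.ball 0 1 : Set E) = norm ⁻¹' Set.Iio 1 := by ext; simp
  have radial : Measure.volumeIoiPow (Module.finrank ℝ E - 1) (Subtype.val ⁻¹' Set.Iio (1 : ℝ)) =
      (Module.finrank ℝ E : ℝ≥0∞)⁻¹ := by
    have h := Measure.volumeIoiPow_apply_Iio (Module.finrank ℝ E - 1) ⟨1, Set.mem_Ioi.2 one_pos⟩
    rw [one_pow, Nat.cast_pred hpos, sub_add_cancel, one_div,
      ENNReal.ofReal_inv_of_pos (by positivity), ENNReal.ofReal_natCast] at h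
    exact h
  rw [ball_eq, measure_inter_norm_preimage_eq_toSphere_mul μ hK hKm measurableSet_Iio, radial,
    mul_left_comm, ENNReal.mul_inv_cancel (by simpa using hpos.ne') (by simp), mul_one]

lemma measure_inter_norm_preimage (hK : IsDilationInvariant K) (hKm : MeasurableSet K)
    (hA : MeasurableSet A) (hA0 : A ⊆ Set.Ioi 0) :
    μ (K ∩ norm ⁻¹' A) = Module.finrank ℝ E * μ (K ∩ Metric.ball 0 1) *
      ∫⁻ r in A, ENNReal.ofReal (r ^ (Module.finrank ℝ E - 1)) := by
  rw [measure_inter_norm_preimage_eq_toSphere_mul μ hK hKm hA,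
    toSphere_preimage_val_eq_finrank_mul μ hK hKm, Measure.volumeIoiPow,
    withDensity_apply _ (measurable_subtype_coe hA),
    setLIntegral_subtype measurableSet_Ioi _
      fun r : ℝ => ENNReal.ofReal (r ^ (Module.finrank ℝ E - 1)),
    Subtype.image_preimage_coe, Set.inter_eq_right.2 hA0]

lemma volume_Ioo_inter_preimage_sub_one {s : Set ℝ} (hs : MeasurableSet s) :
    volume (Set.Ioo 1 (1 + m) ∩ (fun r => r - 1) ⁻¹' s) = volume (s ∩ Set.Ioo 0 m) := by
  rw [← (measurePreserving_sub_right volume (1 : ℝ)).measure_preimage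
    (hs.inter measurableSet_Ioo).nullMeasurableSet]
  congr 1
  ext r
  simp [and_comm, add_comm]

lemma volume_Icc_inter_preimage_abs_sub_one_le {s : Set ℝ} (hs : MeasurableSet s) :
    volume (Set.Icc (1 - m) (1 + m) ∩ (fun r => |r - 1|) ⁻¹' s) ≤
      2 * volume (s ∩ Set.Ioo 0 m) := by
  have hsm := (hs.inter (measurableSet_Icc (a := 0) (b := m))).nullMeasurableSet (μ := volume)
  calc
    _ ≤ volume ((fun r => r - 1) ⁻¹' (s ∩ Set.Icc 0 m) ∪
          (fun r => 1 - r) ⁻¹' (s ∩ Set.Icc 0 m)) := by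
      refine measure_mono fun r ⟨⟨hr₁, hr₂⟩, hrs⟩ => ?_
      rcases le_total 0 (r - 1) with hr | hr
      · rw [Set.mem_preimage, abs_of_nonneg hr] at hrs
        exact Or.inl ⟨hrs, hr, by linarith⟩
      · rw [Set.mem_preimage, abs_of_nonpos hr, neg_sub] at hrs
        exact Or.inr ⟨hrs, by linarith, by linarith⟩
    _ ≤ volume (s ∩ Set.Icc 0 m) + volume (s ∩ Set.Icc 0 m) := by
      refine (measure_union_le _ _).trans_eq ?_
      rw [(measurePreserving_sub_right volume (1 : ℝ)).measure_preimage hsm,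
        (Measure.measurePreserving_sub_left volume (1 : ℝ)).measure_preimage hsm]
    _ = 2 * volume (s ∩ Set.Ioo 0 m) := by
      have h : (s ∩ Set.Ioo 0 m : Set ℝ) =ᵐ[volume] (s ∩ Set.Icc 0 m : Set ℝ) :=
        (EventuallyEq.refl _ s).inter Ioo_ae_eq_Icc
      rw [← two_mul, measure_congr h]

lemma smul_restrict_Ioo_le_map_abs_norm_sub_one (hK : IsDilationInvariant K)
    (hKm : MeasurableSet K) :
    μ (K ∩ Metric.ball 0 1) • volume.restrict (Set.Ioo 0 m) ≤
      (μ.restrict (K ∩ unitShell m)).map fun ξ => |‖ξ‖ - 1| := by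
  refine Measure.le_iff.2 fun s hs => ?_
  rw [Measure.map_apply (by fun_prop) hs, Measure.restrict_apply (hs.preimage (by fun_prop)),
    Measure.smul_apply, Measure.restrict_apply hs, smul_eq_mul,
    ← volume_Ioo_inter_preimage_sub_one hs]
  set A : Set ℝ := Set.Ioo 1 (1 + m) ∩ (fun r => r - 1) ⁻¹' s
  have hA : MeasurableSet A := measurableSet_Ioo.inter (hs.preimage (by fun_prop))
  have one_le_finrank : (1 : ℝ≥0∞) ≤ Module.finrank ℝ E :=
    Nat.one_le_cast.2 Module.finrank_pos
  have volume_le : volume A ≤ ∫⁻ r in A, ENNReal.ofReal (r ^ (Module.finrank ℝ E - 1)) := by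
    rw [← setLIntegral_one]
    exact setLIntegral_mono' hA fun r hr => ENNReal.one_le_ofReal.2 (one_le_pow₀ hr.1.1.le)
  calc
    _ ≤ Module.finrank ℝ E * μ (K ∩ Metric.ball 0 1) *
          ∫⁻ r in A, ENNReal.ofReal (r ^ (Module.finrank ℝ E - 1)) :=
      mul_le_mul' (le_mul_of_one_le_left' one_le_finrank) volume_le
    _ = μ (K ∩ norm ⁻¹' A) :=
      (measure_inter_norm_preimage μ hK hKm hA fun r hr => one_pos.trans hr.1.1).symm
    _ ≤ _ := by
      refine measure_mono fun ξ ⟨hξK, ⟨hξ₁, hξ₂⟩, hξs⟩ => ?_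
      have abs_eq : |‖ξ‖ - 1| = ‖ξ‖ - 1 := abs_of_pos (by linarith)
      refine ⟨?_, hξK, ?_⟩
      · rwa [Set.mem_preimage, abs_eq]
      · change |‖ξ‖ - 1| ≤ m
        linarith

lemma map_abs_norm_sub_one_le_smul_restrict_Ioo (hK : IsDilationInvariant K)
    (hKm : MeasurableSet K) (hm : m < 1) :
    (μ.restrict (K ∩ unitShell m)).map (fun ξ => |‖ξ‖ - 1|) ≤
      (Module.finrank ℝ E * μ (K ∩ Metric.ball 0 1) * 2 ^ Module.finrank ℝ E) •
        volume.restrict (Set.Ioo 0 m) := by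
  refine Measure.le_iff.2 fun s hs => ?_
  rw [Measure.map_apply (by fun_prop) hs, Measure.restrict_apply (hs.preimage (by fun_prop)),
    Measure.smul_apply, Measure.restrict_apply hs, smul_eq_mul, mul_assoc]
  set A : Set ℝ := Set.Icc (1 - m) (1 + m) ∩ (fun r => |r - 1|) ⁻¹' s
  have hA : MeasurableSet A := measurableSet_Icc.inter (hs.preimage (by fun_prop))
  have hA0 : A ⊆ Set.Ioi 0 := fun r hr => by
    rw [Set.mem_Ioi]
    linarith [hr.1.1]
  have lintegral_le : ∫⁻ r in A, ENNReal.ofReal (r ^ (Module.finrank ℝ E - 1)) ≤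
      2 ^ (Module.finrank ℝ E - 1) * volume A := by
    rw [← setLIntegral_const]
    refine setLIntegral_mono' hA fun r hr => ?_
    rw [ENNReal.ofReal_pow (hA0 hr).le]
    gcongr
    exact ENNReal.ofReal_le_ofNat.2 (by linarith [hr.1.2])
  calc
    _ ≤ μ (K ∩ norm ⁻¹' A) := by
      refine measure_mono fun ξ ⟨hξs, hξK, hξm⟩ => ?_
      exact ⟨hξK, ⟨le_norm_of_mem_unitShell hξm, norm_le_of_mem_unitShell hξm⟩, hξs⟩
    _ = _ := measure_inter_norm_preimage μ hK hKm hA hA0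
    _ ≤ Module.finrank ℝ E * μ (K ∩ Metric.ball 0 1) *
          (2 ^ (Module.finrank ℝ E - 1) * (2 * volume (s ∩ Set.Ioo 0 m))) := by
      gcongr
      exact lintegral_le.trans
        (mul_le_mul_right (volume_Icc_inter_preimage_abs_sub_one_le hs) _)
    _ = _ := by rw [← mul_assoc (2 ^ _) 2, pow_sub_one_mul Module.finrank_pos.ne']

lemma integrable_map_abs_norm_sub_one (hK : IsDilationInvariant K) (hKm : MeasurableSet K)
    (hm : m < 1) (hH : IntegrableOn H (Set.Ioo 0 m)) :
    Integrable H ((μ.restrict (K ∩ unitShell m)).map fun ξ => |‖ξ‖ - 1|) :=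
  (hH.smul_measure (by finiteness)).mono_measure
    (map_abs_norm_sub_one_le_smul_restrict_Ioo μ hK hKm hm)

lemma integrableOn_comp_abs_norm_sub_one (hK : IsDilationInvariant K) (hKm : MeasurableSet K)
    (hm : m < 1) (hH : IntegrableOn H (Set.Ioo 0 m)) :
    IntegrableOn (fun ξ => H |‖ξ‖ - 1|) (K ∩ unitShell m) μ :=
  (integrable_map_abs_norm_sub_one μ hK hKm hm hH).comp_measurable (by fun_prop)

lemma setIntegral_comp_abs_norm_sub_one_eq (hK : IsDilationInvariant K) (hKm : MeasurableSet K)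
    (hm : m < 1) (hH : IntegrableOn H (Set.Ioo 0 m)) :
    ∫ ξ in K ∩ unitShell m, H |‖ξ‖ - 1| ∂μ =
      ∫ t, H t ∂(μ.restrict (K ∩ unitShell m)).map fun ξ => |‖ξ‖ - 1| :=
  (integral_map (by fun_prop)
    (integrable_map_abs_norm_sub_one μ hK hKm hm hH).aestronglyMeasurable).symm

lemma map_abs_norm_sub_one_absolutelyContinuous (hK : IsDilationInvariant K)
    (hKm : MeasurableSet K) (hm : m < 1) :
    (μ.restrict (K ∩ unitShell m)).map (fun ξ => |‖ξ‖ - 1|) ≪ volume.restrict (Set.Ioo 0 m) :=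
  (map_abs_norm_sub_one_le_smul_restrict_Ioo μ hK hKm hm).absolutelyContinuous.trans
    (Measure.smul_absolutelyContinuous)

lemma measureReal_mul_setIntegral_Ioo_le (hK : IsDilationInvariant K) (hKm : MeasurableSet K)
    (hm : m < 1) (hH : IntegrableOn H (Set.Ioo 0 m)) (hH0 : ∀ t ∈ Set.Ioo 0 m, 0 ≤ H t) :
    μ.real (K ∩ Metric.ball 0 1) * ∫ t in Set.Ioo 0 m, H t ≤
      ∫ ξ in K ∩ unitShell m, H |‖ξ‖ - 1| ∂μ := by
  have hH0' : 0 ≤ᵐ[volume.restrict (Set.Ioo 0 m)] H :=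
    ae_restrict_of_forall_mem measurableSet_Ioo hH0
  rw [setIntegral_comp_abs_norm_sub_one_eq μ hK hKm hm hH, Measure.real, ← smul_eq_mul,
    ← integral_smul_measure]
  exact integral_mono_measure (smul_restrict_Ioo_le_map_abs_norm_sub_one μ hK hKm)
    (hH0'.filter_mono (map_abs_norm_sub_one_absolutelyContinuous μ hK hKm hm).ae_le)
    (integrable_map_abs_norm_sub_one μ hK hKm hm hH)

lemma setIntegral_comp_abs_norm_sub_one_le (hK : IsDilationInvariant K) (hKm : MeasurableSet K)
    (hm : m < 1) (hH : IntegrableOn H (Set.Ioo 0 m)) (hH0 : ∀ t ∈ Set.Ioo 0 m, 0 ≤ H t) :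
    ∫ ξ in K ∩ unitShell m, H |‖ξ‖ - 1| ∂μ ≤
      Module.finrank ℝ E * μ.real (K ∩ Metric.ball 0 1) * 2 ^ Module.finrank ℝ E *
        ∫ t in Set.Ioo 0 m, H t := by
  have hH0' : 0 ≤ᵐ[volume.restrict (Set.Ioo 0 m)] H :=
    ae_restrict_of_forall_mem measurableSet_Ioo hH0
  calc
    _ = _ := setIntegral_comp_abs_norm_sub_one_eq μ hK hKm hm hH
    _ ≤ _ := integral_mono_measure (map_abs_norm_sub_one_le_smul_restrict_Ioo μ hK hKm hm)
      (hH0'.filter_mono Measure.smul_absolutelyContinuous.ae_le) (hH.smul_measure (by finiteness))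
    _ = _ := by simp [integral_smul_measure, Measure.real]

end Cone

section Fourier

variable {V : Type*} [NormedAddCommGroup V] [InnerProductSpace ℝ V] [MeasurableSpace V]
  [BorelSpace V] [FiniteDimensional ℝ V] {f w : V → ℂ}

lemma continuous_fourierInv (hf : Integrable f) : Continuous (𝓕⁻ f) := by
  have h : Continuous (𝓕 f) :=
    VectorFourier.fourierIntegral_continuous Real.continuous_fourierChar continuous_inner hf
  rw [funext (Real.fourierInv_eq_fourier_neg f)]
  exact h.comp continuous_neg

lemma norm_sq_fourierInv_eq_integral_prod (f : V → ℂ) (x : V) :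
    (‖𝓕⁻ f x‖ ^ 2 : ℂ) = ∫ z : V × V, f z.1 * starRingEnd ℂ (f z.2) *
      Complex.exp ((2 * π * ⟪x, z.1 - z.2⟫ : ℝ) * Complex.I) := by
  rw [← Complex.mul_conj', Real.fourierInv_eq', ← integral_conj, Measure.volume_eq_prod,
    ← integral_prod_mul]
  congr with z
  have exp_split : Complex.exp ((2 * π * ⟪x, z.1 - z.2⟫ : ℝ) * Complex.I) =
      Complex.exp ((2 * π * ⟪z.1, x⟫ : ℝ) * Complex.I) *
        starRingEnd ℂ (Complex.exp ((2 * π * ⟪z.2, x⟫ : ℝ) * Complex.I)) := by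
    rw [← Complex.exp_conj, map_mul, Complex.conj_ofReal, Complex.conj_I, ← Complex.exp_add,
      inner_sub_right, real_inner_comm x, real_inner_comm x]
    push_cast
    ring_nf
  rw [exp_split]
  simp only [smul_eq_mul, map_mul]
  ring

lemma integral_norm_sq_fourierInv_mul (hf : Integrable f) (hw : Integrable w) :
    ∫ x, (‖𝓕⁻ f x‖ ^ 2 : ℂ) * w x =
      ∫ z : V × V, f z.1 * starRingEnd ℂ (f z.2) * 𝓕⁻ w (z.1 - z.2) := by
  have integrable_tensor : Integrable (fun q : V × (V × V) =>
      w q.1 * (f q.2.1 * starRingEnd ℂ (f q.2.2))) :=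
    hw.mul_prod (hf.mul_prod ((LinearIsometryEquiv.integrable_comp_iff Complex.conjLIE).2 hf))
  have continuous_phase : Continuous (fun q : V × (V × V) =>
      Complex.exp ((2 * π * ⟪q.1, q.2.1 - q.2.2⟫ : ℝ) * Complex.I)) := by fun_prop
  have integrable_integrand := integrable_tensor.bdd_mul (c := 1)
    continuous_phase.aestronglyMeasurable
    (ae_of_all _ fun q => (Complex.norm_exp_ofReal_mul_I _).le)
  calc
    _ = ∫ x, ∫ z : V × V, Complex.exp ((2 * π * ⟪x, z.1 - z.2⟫ : ℝ) * Complex.I) *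
          (w x * (f z.1 * starRingEnd ℂ (f z.2))) := by
      congr with x
      rw [norm_sq_fourierInv_eq_integral_prod, ← integral_mul_const]
      congr with z
      ring
    _ = ∫ z : V × V, ∫ x, Complex.exp ((2 * π * ⟪x, z.1 - z.2⟫ : ℝ) * Complex.I) *
          (w x * (f z.1 * starRingEnd ℂ (f z.2))) := integral_integral_swap integrable_integrand
    _ = _ := by
      congr with z
      rw [Real.fourierInv_eq', ← integral_const_mul]
      congr with x
      rw [smul_eq_mul]
      ring

end Fourier

section Gaussian

variable {ι : Type*} [Fintype ι] {σ : ι → ℝ}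

/-- The anisotropic Gaussian with peak value `1` and width `(σ i)⁻¹` in the `i`-th coordinate. The
factor `π` makes it self-dual: its Fourier transform is a multiple of `gaussianWeight σ⁻¹`. -/
def gaussianWeight (σ : ι → ℝ) (x : EuclideanSpace ℝ ι) : ℝ :=
  Real.exp (-∑ i, π * (σ i * x i) ^ 2)

lemma gaussianWeight_pos (σ : ι → ℝ) (x : EuclideanSpace ℝ ι) : 0 < gaussianWeight σ x :=
  Real.exp_pos _

lemma gaussianWeight_le_one (σ : ι → ℝ) (x : EuclideanSpace ℝ ι) : gaussianWeight σ x ≤ 1 :=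
  Real.exp_le_one_iff.2 (neg_nonpos.2 (Finset.sum_nonneg fun _ _ => by positivity))

lemma continuous_gaussianWeight (σ : ι → ℝ) : Continuous (gaussianWeight σ) := by
  unfold gaussianWeight
  fun_prop

lemma exp_neg_le_gaussianWeight {κ : ℝ} {x : EuclideanSpace ℝ ι} (hx : ∀ i, |σ i * x i| ≤ κ) :
    Real.exp (-(Fintype.card ι * (π * κ ^ 2))) ≤ gaussianWeight σ x := by
  refine Real.exp_le_exp.2 (neg_le_neg ?_)
  rw [← nsmul_eq_mul]
  refine Finset.sum_le_card_nsmul _ _ _ fun i _ => ?_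
  have sq_le : (σ i * x i) ^ 2 ≤ κ ^ 2 := sq_le_sq.2 ((hx i).trans (le_abs_self κ))
  gcongr

lemma integrable_gaussianWeight (hσ : ∀ i, 0 < σ i) : Integrable (gaussianWeight σ) := by
  have h := GaussianFourier.integrable_cexp_neg_sum_mul_add (b := fun i => ((π * σ i ^ 2 : ℝ) : ℂ))
    (fun i => by have := hσ i; rw [Complex.ofReal_re]; positivity) 0
  rw [← (PiLp.volume_preserving_toLp ι).integrable_comp_emb
    (MeasurableEquiv.toLp 2 (ι → ℝ)).measurableEmbedding]
  refine h.norm.congr (ae_of_all _ fun x => ?_)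
  simp [gaussianWeight, Complex.norm_exp, mul_pow, mul_assoc, ← Complex.ofReal_pow]

lemma fourierInv_gaussianWeight (hσ : ∀ i, 0 < σ i) (ζ : EuclideanSpace ℝ ι) :
    𝓕⁻ (fun x => (gaussianWeight σ x : ℂ)) ζ = ((∏ i, σ i)⁻¹ * gaussianWeight σ⁻¹ ζ : ℝ) := by
  have h := GaussianFourier.integral_cexp_neg_sum_mul_add (b := fun i => ((π * σ i ^ 2 : ℝ) : ℂ))
    (fun i => by have := hσ i; rw [Complex.ofReal_re]; positivity)
    (fun i => (2 * π * ζ i : ℝ) * Complex.I)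
  have prod_eq : (∏ i, σ i)⁻¹ * gaussianWeight σ⁻¹ ζ =
      ∏ i, (π / (π * σ i ^ 2)) ^ (1 / 2 : ℝ) * Real.exp (-(π * ((σ i)⁻¹ * ζ i) ^ 2)) := by
    rw [gaussianWeight, ← Finset.sum_neg_distrib, Real.exp_sum, ← Finset.prod_inv_distrib,
      ← Finset.prod_mul_distrib]
    refine Finset.prod_congr rfl fun i _ => ?_
    rw [div_mul_cancel_left₀ pi_ne_zero, ← Real.sqrt_eq_rpow, ← inv_pow,
      Real.sqrt_sq (inv_pos.2 (hσ i)).le, Pi.inv_apply]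
  rw [Real.fourierInv_eq', ← (PiLp.volume_preserving_toLp ι).integral_comp
    (MeasurableEquiv.toLp 2 (ι → ℝ)).measurableEmbedding, prod_eq]
  convert h using 1
  · congr with x
    rw [gaussianWeight, Complex.ofReal_exp, smul_eq_mul, ← Complex.exp_add, add_comm]
    simp only [PiLp.inner_apply, RCLike.inner_apply, conj_trivial]
    push_cast
    rw [Finset.mul_sum, Finset.sum_mul]
    congr 2
    · exact congrArg Neg.neg (Finset.sum_congr rfl fun i _ => by ring)
    · exact Finset.sum_congr rfl fun i _ => by ring
  · rw [Complex.ofReal_prod]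
    refine Finset.prod_congr rfl fun i _ => ?_
    have hσi : (σ i : ℂ) ≠ 0 := Complex.ofReal_ne_zero.2 (hσ i).ne'
    have hπ : (π : ℂ) ≠ 0 := Complex.ofReal_ne_zero.2 pi_ne_zero
    rw [Complex.ofReal_mul, Complex.ofReal_cpow (by positivity), Complex.ofReal_exp]
    push_cast
    congr 2
    field_simp
    rw [Complex.I_sq]
    ring

lemma integral_gaussianWeight (hσ : ∀ i, 0 < σ i) : ∫ x, gaussianWeight σ x = (∏ i, σ i)⁻¹ := by
  have h := fourierInv_gaussianWeight hσ 0
  rw [Real.fourierInv_eq'] at h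
  simp only [inner_zero_right, mul_zero, Complex.ofReal_zero, zero_mul, Complex.exp_zero, one_smul]
    at h
  rw [integral_complex_ofReal, Complex.ofReal_inj] at h
  simpa [gaussianWeight] using h

lemma integral_norm_sq_fourierInv_mul_gaussianWeight {f : EuclideanSpace ℝ ι → ℝ}
    (hf : Integrable f) (hσ : ∀ i, 0 < σ i) :
    ∫ x, ‖𝓕⁻ (fun ξ => (f ξ : ℂ)) x‖ ^ 2 * gaussianWeight σ x =
      (∏ i, σ i)⁻¹ * ∫ z : EuclideanSpace ℝ ι × EuclideanSpace ℝ ι,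
        f z.1 * f z.2 * gaussianWeight σ⁻¹ (z.1 - z.2) := by
  have h := integral_norm_sq_fourierInv_mul (f := fun ξ => (f ξ : ℂ))
    (w := fun x => (gaussianWeight σ x : ℂ)) hf.ofReal (integrable_gaussianWeight hσ).ofReal
  simp only [fourierInv_gaussianWeight hσ, Complex.conj_ofReal] at h
  rw [← integral_const_mul]
  refine Complex.ofReal_injective ?_
  rw [← integral_complex_ofReal, ← integral_complex_ofReal]
  push_cast
  refine h.trans (integral_congr_ae (ae_of_all _ fun z => ?_))
  push_cast
  ring

end Gaussian

section LabelledPieces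

variable {α β : Type*} [MeasurableSpace α] [MeasurableSpace β] [MeasurableSingletonClass β]
  {μ : Measure α} {f : α → ℝ} {S : Set α} {label : α → β} {J : Finset β}

lemma setIntegral_eq_sum_labelled_pieces (hf : Integrable f μ) (hS : MeasurableSet S)
    (hlabel : Measurable label) (hJ : ∀ x ∈ S, label x ∈ J) :
    ∫ x in S, f x ∂μ = ∑ j ∈ J, ∫ x in S ∩ label ⁻¹' {j}, f x ∂μ := by
  have cover : S = ⋃ j ∈ J, S ∩ label ⁻¹' {j} := by
    ext x
    simpa using hJ x
  rw [← integral_biUnion_finset J (fun j _ => hS.inter (hlabel (measurableSet_singleton j)))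
    (fun i _ j _ hij => ((Set.disjoint_singleton.2 hij).preimage label).mono
      Set.inter_subset_right Set.inter_subset_right) fun j _ => hf.integrableOn, ← cover]

lemma sum_setIntegral_labelled_squares_le [SFinite μ] {F : α × α → ℝ} (hF : Integrable F (μ.prod μ))
    (hF0 : ∀ z, 0 ≤ F z) (hS : MeasurableSet S) (hlabel : Measurable label) (J : Finset β) :
    ∑ j ∈ J, ∫ z in (S ∩ label ⁻¹' {j}) ×ˢ (S ∩ label ⁻¹' {j}), F z ∂μ.prod μ ≤
      ∫ z, F z ∂μ.prod μ := by
  have hpiece (j : β) : MeasurableSet (S ∩ label ⁻¹' {j}) :=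
    hS.inter (hlabel (measurableSet_singleton j))
  rw [← integral_biUnion_finset J (fun j _ => (hpiece j).prod (hpiece j))
    (fun i _ j _ hij => Set.Disjoint.set_prod_left (((Set.disjoint_singleton.2 hij).preimage
      label).mono Set.inter_subset_right Set.inter_subset_right) _ _) fun j _ => hF.integrableOn]
  exact setIntegral_le_integral hF (ae_of_all _ hF0)

lemma mul_sq_setIntegral_le_card_mul_integral_prod [SFinite μ] {W : α × α → ℝ} {ω : ℝ}
    (hf : Integrable f μ) (hf0 : ∀ x, 0 ≤ f x)
    (hfW : Integrable (fun z => f z.1 * f z.2 * W z) (μ.prod μ)) (hW : ∀ z, 0 ≤ W z)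
    (hS : MeasurableSet S) (hlabel : Measurable label) (hJ : ∀ x ∈ S, label x ∈ J) (hω : 0 ≤ ω)
    (hωW : ∀ x ∈ S, ∀ y ∈ S, label x = label y → ω ≤ W (x, y)) :
    ω * (∫ x in S, f x ∂μ) ^ 2 ≤ J.card * ∫ z, f z.1 * f z.2 * W z ∂μ.prod μ := by
  have hpiece (j : β) : MeasurableSet (S ∩ label ⁻¹' {j}) :=
    hS.inter (hlabel (measurableSet_singleton j))
  have piece_le (j : β) : ω * (∫ x in S ∩ label ⁻¹' {j}, f x ∂μ) ^ 2 ≤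
      ∫ z in (S ∩ label ⁻¹' {j}) ×ˢ (S ∩ label ⁻¹' {j}), f z.1 * f z.2 * W z ∂μ.prod μ := by
    rw [sq, ← setIntegral_prod_mul, ← integral_const_mul]
    refine setIntegral_mono_on ((hf.mul_prod hf).const_mul ω).integrableOn hfW.integrableOn
      ((hpiece j).prod (hpiece j)) ?_
    rintro ⟨x, y⟩ ⟨⟨hxS, hxj⟩, hyS, hyj⟩
    rw [mul_comm]
    exact mul_le_mul_of_nonneg_left (hωW x hxS y hyS (Eq.trans hxj (Eq.symm hyj)))
      (mul_nonneg (hf0 x) (hf0 y))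
  calc
    _ ≤ ω * (J.card * ∑ j ∈ J, (∫ x in S ∩ label ⁻¹' {j}, f x ∂μ) ^ 2) := by
      rw [setIntegral_eq_sum_labelled_pieces hf hS hlabel hJ]
      exact mul_le_mul_of_nonneg_left sq_sum_le_card_mul_sum_sq hω
    _ = J.card * ∑ j ∈ J, ω * (∫ x in S ∩ label ⁻¹' {j}, f x ∂μ) ^ 2 := by
      rw [← Finset.mul_sum, mul_left_comm]
    _ ≤ _ := mul_le_mul_of_nonneg_left ((Finset.sum_le_sum fun j _ => piece_le j).trans
      (sum_setIntegral_labelled_squares_le hfW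
        (fun z => mul_nonneg (mul_nonneg (hf0 _) (hf0 _)) (hW z)) hS hlabel J)) (by positivity)

end LabelledPieces

section WeightedHolder

variable {α F : Type*} [MeasurableSpace α] [NormedAddCommGroup F] {μ : Measure α} {v : α → F}
  {w : α → ℝ}

lemma ofReal_integral_norm_sq_mul_le_eLpNorm_withDensity (hv : AEStronglyMeasurable v μ)
    (hw : Measurable w) (hw0 : ∀ x, 0 ≤ w x) :
    ENNReal.ofReal (∫ x, ‖v x‖ ^ 2 * w x ∂μ) ≤
      eLpNorm v 2 (μ.withDensity fun x => ENNReal.ofReal (w x)) ^ 2 := by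
  rw [integral_eq_lintegral_of_nonneg_ae
    (ae_of_all _ fun x => mul_nonneg (sq_nonneg _) (hw0 x))
    ((hv.norm.pow 2).mul hw.aestronglyMeasurable)]
  refine ENNReal.ofReal_toReal_le.trans_eq ?_
  have h := eLpNorm_nnreal_pow_eq_lintegral (f := v) (p := 2)
    (μ := μ.withDensity fun x => ENNReal.ofReal (w x)) two_ne_zero
  simp only [NNReal.coe_ofNat, ENNReal.coe_ofNat, ENNReal.rpow_ofNat] at h
  rw [h, lintegral_withDensity_eq_lintegral_mul₀ (by fun_prop) (hv.enorm.pow_const 2)]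
  refine lintegral_congr fun x => ?_
  rw [ENNReal.ofReal_mul (sq_nonneg _), ENNReal.ofReal_pow (norm_nonneg _), ofReal_norm, mul_comm,
    Pi.mul_apply]

/-- Hölder for the measure `w μ`, which is dominated by `μ` because `w ≤ 1`. -/
lemma ofReal_integral_norm_sq_mul_le_eLpNorm {p : ℝ≥0∞} (hp : 2 ≤ p)
    (hv : AEStronglyMeasurable v μ) (hwi : Integrable w μ) (hw : Measurable w)
    (hw0 : ∀ x, 0 ≤ w x) (hw1 : ∀ x, w x ≤ 1) :
    ENNReal.ofReal (∫ x, ‖v x‖ ^ 2 * w x ∂μ) ≤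
      (eLpNorm v p μ * ENNReal.ofReal (∫ x, w x ∂μ) ^ (1 / 2 - 1 / p.toReal)) ^ 2 := by
  set ν := μ.withDensity fun x => ENNReal.ofReal (w x)
  have hνμ : ν ≤ μ :=
    (withDensity_mono (ae_of_all _ fun x => ENNReal.ofReal_le_one.2 (hw1 x))).trans_eq
      withDensity_one
  have hν : ν Set.univ = ENNReal.ofReal (∫ x, w x ∂μ) := by
    rw [withDensity_apply _ MeasurableSet.univ, Measure.restrict_univ,
      ofReal_integral_eq_lintegral_ofReal hwi (ae_of_all _ hw0)]
  have holder : eLpNorm v 2 ν ≤ eLpNorm v p ν * ν Set.univ ^ (1 / 2 - 1 / p.toReal) := by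
    simpa using eLpNorm_le_eLpNorm_mul_rpow_measure_univ hp (hv.mono_measure hνμ)
  rw [← hν]
  refine (ofReal_integral_norm_sq_mul_le_eLpNorm_withDensity hv hw hw0).trans ?_
  gcongr
  exact holder.trans (by gcongr)

lemma ofReal_mul_rpow_le_eLpNorm_of_sq_le_integral {p X : ℝ} (hp : 2 ≤ p)
    (hv : AEStronglyMeasurable v μ) (hwi : Integrable w μ) (hw : Measurable w)
    (hw0 : ∀ x, 0 ≤ w x) (hw1 : ∀ x, w x ≤ 1) (hwpos : 0 < ∫ x, w x ∂μ) (hX : 0 ≤ X)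
    (hXsq : X ^ 2 ≤ ∫ x, ‖v x‖ ^ 2 * w x ∂μ) :
    ENNReal.ofReal (X * (∫ x, w x ∂μ) ^ (1 / p - 1 / 2)) ≤ eLpNorm v (ENNReal.ofReal p) μ := by
  set M := ∫ x, w x ∂μ
  have hp' : (2 : ℝ≥0∞) ≤ ENNReal.ofReal p := ENNReal.ofNat_le_ofReal.2 hp
  have holder := ofReal_integral_norm_sq_mul_le_eLpNorm hp' hv hwi hw hw0 hw1
  rw [ENNReal.toReal_ofReal (by linarith), ENNReal.ofReal_rpow_of_pos hwpos] at holder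
  have ofReal_X_le : ENNReal.ofReal X ≤
      eLpNorm v (ENNReal.ofReal p) μ * ENNReal.ofReal (M ^ (1 / 2 - 1 / p)) := by
    rw [← ENNReal.pow_le_pow_left_iff two_ne_zero, ← ENNReal.ofReal_pow hX]
    exact (ENNReal.ofReal_le_ofReal hXsq).trans holder
  calc
    _ = ENNReal.ofReal X * ENNReal.ofReal (M ^ (1 / p - 1 / 2)) := ENNReal.ofReal_mul hX
    _ ≤ _ := mul_le_mul_left ofReal_X_le _
    _ = _ := by
      rw [mul_assoc, ← ENNReal.ofReal_mul (by positivity), ← Real.rpow_add hwpos]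
      simp

end WeightedHolder

section FourierLowerBound

variable {ι : Type*} [Fintype ι] {σ : ι → ℝ} {f : EuclideanSpace ℝ ι → ℝ}
  {S : Set (EuclideanSpace ℝ ι)} {β : Type*} [MeasurableSpace β] [MeasurableSingletonClass β]
  {label : EuclideanSpace ℝ ι → β} {J : Finset β} {κ : ℝ}

lemma integrable_mul_mul_gaussianWeight_sub (hf : Integrable f) (σ : ι → ℝ) :
    Integrable fun z : EuclideanSpace ℝ ι × EuclideanSpace ℝ ι =>
      f z.1 * f z.2 * gaussianWeight σ (z.1 - z.2) := by
  refine (hf.mul_prod hf).mul_bdd (c := 1)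
    ((continuous_gaussianWeight σ).comp (by fun_prop)).aestronglyMeasurable
    (ae_of_all _ fun z => ?_)
  rw [Real.norm_of_nonneg (gaussianWeight_pos _ _).le]
  exact gaussianWeight_le_one _ _

lemma mul_sq_setIntegral_le_integral_norm_sq_fourierInv_mul_gaussianWeight
    (hf : Integrable f) (hf0 : ∀ ξ, 0 ≤ f ξ) (hσ : ∀ i, 0 < σ i) (hS : MeasurableSet S)
    (hlabel : Measurable label) (hJ : ∀ ξ ∈ S, label ξ ∈ J)
    (hκ : ∀ ξ ∈ S, ∀ η ∈ S, label ξ = label η → ∀ i, |ξ i - η i| ≤ κ * σ i) :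
    Real.exp (-(Fintype.card ι * (π * κ ^ 2))) * (∫ ξ in S, f ξ) ^ 2 ≤
      J.card * (∏ i, σ i) *
        ∫ x, ‖𝓕⁻ (fun ξ => (f ξ : ℂ)) x‖ ^ 2 * gaussianWeight σ x := by
  rw [integral_norm_sq_fourierInv_mul_gaussianWeight hf hσ, mul_assoc,
    mul_inv_cancel_left₀ (Finset.prod_pos fun i _ => hσ i).ne']
  refine mul_sq_setIntegral_le_card_mul_integral_prod
    (W := fun z => gaussianWeight σ⁻¹ (z.1 - z.2)) hf hf0
    (integrable_mul_mul_gaussianWeight_sub hf σ⁻¹) (fun z => (gaussianWeight_pos _ _).le) hS hlabel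
    hJ (Real.exp_pos _).le fun ξ hξ η hη hlab => exp_neg_le_gaussianWeight fun i => ?_
  rw [PiLp.sub_apply, Pi.inv_apply, inv_mul_eq_div, abs_div, abs_of_pos (hσ i),
    div_le_iff₀ (hσ i)]
  exact hκ ξ hξ η hη hlab i

lemma sq_setIntegral_le_integral_norm_sq_fourierInv_mul_gaussianWeight {N : ℝ}
    (hf : Integrable f) (hf0 : ∀ ξ, 0 ≤ f ξ) (hσ : ∀ i, 0 < σ i) (hS : MeasurableSet S)
    (hlabel : Measurable label) (hJ : ∀ ξ ∈ S, label ξ ∈ J) (hN : 0 < N) (hJN : J.card ≤ N)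
    (hκ : ∀ ξ ∈ S, ∀ η ∈ S, label ξ = label η → ∀ i, |ξ i - η i| ≤ κ * σ i) :
    (Real.exp (-(Fintype.card ι * (π * κ ^ 2)) / 2) * N ^ (-1 / 2 : ℝ) *
        (∏ i, σ i) ^ (-1 / 2 : ℝ) * ∫ ξ in S, f ξ) ^ 2 ≤
      ∫ x, ‖𝓕⁻ (fun ξ => (f ξ : ℂ)) x‖ ^ 2 * gaussianWeight σ x := by
  have hP : 0 < ∏ i, σ i := Finset.prod_pos fun i _ => hσ i
  have nonneg : 0 ≤ ∫ x, ‖𝓕⁻ (fun ξ => (f ξ : ℂ)) x‖ ^ 2 * gaussianWeight σ x :=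
    integral_nonneg fun x => mul_nonneg (sq_nonneg _) (gaussianWeight_pos _ _).le
  have sq_rpow {t : ℝ} (ht : 0 < t) : (t ^ (-1 / 2 : ℝ)) ^ 2 = t⁻¹ := by
    rw [← Real.rpow_mul_natCast ht.le, ← Real.rpow_neg_one]
    norm_num
  have sq_exp (t : ℝ) : Real.exp (t / 2) ^ 2 = Real.exp t := by
    rw [← Real.exp_nat_mul]
    ring_nf
  rw [mul_pow, mul_pow, mul_pow, sq_rpow hN, sq_rpow hP, sq_exp, mul_assoc _ N⁻¹, ← mul_inv,
    mul_right_comm, ← div_eq_mul_inv, div_le_iff₀' (mul_pos hN hP)]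
  refine (mul_sq_setIntegral_le_integral_norm_sq_fourierInv_mul_gaussianWeight hf hf0 hσ hS
    hlabel hJ hκ).trans ?_
  gcongr

theorem ofReal_setIntegral_le_eLpNorm_fourierInv {p N : ℝ} (hp : 2 ≤ p) (hf : Integrable f)
    (hf0 : ∀ ξ, 0 ≤ f ξ) (hσ : ∀ i, 0 < σ i) (hS : MeasurableSet S) (hlabel : Measurable label)
    (hJ : ∀ ξ ∈ S, label ξ ∈ J) (hN : 0 < N) (hJN : J.card ≤ N)
    (hκ : ∀ ξ ∈ S, ∀ η ∈ S, label ξ = label η → ∀ i, |ξ i - η i| ≤ κ * σ i) :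
    ENNReal.ofReal (Real.exp (-(Fintype.card ι * (π * κ ^ 2)) / 2) * N ^ (-1 / 2 : ℝ) *
        (∏ i, σ i) ^ (-1 / p) * ∫ ξ in S, f ξ) ≤
      eLpNorm (𝓕⁻ fun ξ => (f ξ : ℂ)) (ENNReal.ofReal p) volume := by
  have hP : 0 < ∏ i, σ i := Finset.prod_pos fun i _ => hσ i
  have hmass : 0 < ∫ x, gaussianWeight σ x := integral_gaussianWeight hσ ▸ inv_pos.2 hP
  have exponent_split : (∏ i, σ i) ^ (-1 / p) =
      (∏ i, σ i) ^ (-1 / 2 : ℝ) * (∫ x, gaussianWeight σ x) ^ (1 / p - 1 / 2) := by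
    rw [integral_gaussianWeight hσ, Real.inv_rpow hP.le, ← Real.rpow_neg hP.le,
      ← Real.rpow_add hP]
    ring_nf
  rw [exponent_split, ← mul_assoc _ _ (_ ^ _), mul_right_comm]
  exact ofReal_mul_rpow_le_eLpNorm_of_sq_le_integral hp
    (continuous_fourierInv hf.ofReal).aestronglyMeasurable (integrable_gaussianWeight hσ)
    (continuous_gaussianWeight σ).measurable (fun x => (gaussianWeight_pos σ x).le)
    (gaussianWeight_le_one σ) hmass
    (mul_nonneg (by positivity) (setIntegral_nonneg hS fun ξ _ => hf0 ξ))
    (sq_setIntegral_le_integral_norm_sq_fourierInv_mul_gaussianWeight hf hf0 hσ hS hlabel hJ hN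
      hJN hκ)

end FourierLowerBound

section CapGeometry

variable {ι : Type*} {T R : Finset ι} {δ ρ τ m : ℝ} {L : ι} {ξ η : EuclideanSpace ℝ ι}

/-- The side lengths of the boxes adapted to the cap: `δ` along `T`, and `ρ` along the other
coordinates. -/
def capScale [DecidableEq ι] (T : Finset ι) (δ ρ : ℝ) (i : ι) : ℝ := if i ∈ T then δ else ρ

lemma capScale_pos [DecidableEq ι] (hδ : 0 < δ) (hρ : 0 < ρ) (i : ι) : 0 < capScale T δ ρ i := by
  unfold capScale
  split_ifs <;> assumption

/-- The cell, in the grid of mesh `ρ` along the coordinates in `R`, that contains a point. -/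
def gridLabel (R : Finset ι) (ρ : ℝ) (ξ : EuclideanSpace ℝ ι) : R → ℤ := fun i => ⌊ξ i / ρ⌋

lemma measurable_gridLabel (R : Finset ι) (ρ : ℝ) : Measurable (gridLabel R ρ) :=
  measurable_pi_iff.2 fun i => Int.measurable_floor.comp (by fun_prop)

lemma abs_apply_sub_apply_le_of_gridLabel_eq (hρ : 0 < ρ) (h : gridLabel R ρ ξ = gridLabel R ρ η)
    {i : ι} (hi : i ∈ R) : |ξ i - η i| ≤ ρ := by
  have h' := Int.abs_sub_lt_one_of_floor_eq_floor (congrFun h ⟨i, hi⟩)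
  rw [← sub_div, abs_div, abs_of_pos hρ, div_lt_one hρ] at h'
  exact h'.le

variable [Fintype ι]

/-- The cone over the spherical cap `C^k_δ`: the directions whose component along the coordinates
in `T` has norm less than `δ`. -/
def capCone (T : Finset ι) (δ : ℝ) : Set (EuclideanSpace ℝ ι) :=
  {ξ | ∑ i ∈ T, ξ i ^ 2 < δ ^ 2 * ‖ξ‖ ^ 2}

/-- The part of `capCone T δ` within angle `π / 3` of the `L`-th coordinate axis. There the unit
sphere is a graph over the remaining coordinates. -/
def capSector (T : Finset ι) (δ : ℝ) (L : ι) : Set (EuclideanSpace ℝ ι) :=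
  capCone T δ ∩ {ξ | ‖ξ‖ ≤ 2 * ξ L}

lemma measurableSet_capCone (T : Finset ι) (δ : ℝ) : MeasurableSet (capCone T δ) :=
  measurableSet_lt (by fun_prop) (by fun_prop)

lemma measurableSet_capSector (T : Finset ι) (δ : ℝ) (L : ι) :
    MeasurableSet (capSector T δ L) :=
  (measurableSet_capCone T δ).inter (measurableSet_le (by fun_prop) (by fun_prop))

lemma isDilationInvariant_capCone (T : Finset ι) (δ : ℝ) :
    IsDilationInvariant (capCone T δ) := by
  intro t ht ξ
  simp only [capCone, Set.mem_ofPred_eq, PiLp.smul_apply, smul_eq_mul, norm_smul,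
    Real.norm_of_nonneg ht.le, mul_pow, ← Finset.mul_sum]
  rw [mul_left_comm]
  exact mul_lt_mul_iff_right₀ (by positivity)

lemma isDilationInvariant_capSector (T : Finset ι) (δ : ℝ) (L : ι) :
    IsDilationInvariant (capSector T δ L) := by
  intro t ht ξ
  refine and_congr (isDilationInvariant_capCone T δ ht ξ) ?_
  simp only [Set.mem_ofPred_eq, PiLp.smul_apply, smul_eq_mul, norm_smul,
    Real.norm_of_nonneg ht.le]
  rw [mul_left_comm]
  exact mul_le_mul_iff_right₀ ht

lemma abs_apply_le_mul_norm_of_mem_capCone (hδ : 0 ≤ δ) (hξ : ξ ∈ capCone T δ) {i : ι}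
    (hi : i ∈ T) : |ξ i| ≤ δ * ‖ξ‖ := by
  have hξ' : ∑ i ∈ T, ξ i ^ 2 < δ ^ 2 * ‖ξ‖ ^ 2 := hξ
  refine abs_le_of_sq_le_sq ?_ (by positivity)
  rw [mul_pow]
  exact (Finset.single_le_sum (f := fun i => ξ i ^ 2) (fun i _ => sq_nonneg _) hi).trans hξ'.le

lemma abs_apply_le_three_halves (hξ : ‖ξ‖ ≤ 3 / 2) (i : ι) : |ξ i| ≤ 3 / 2 :=
  (PiLp.norm_apply_le ξ i).trans hξ

lemma norm_le_three_halves (hm : m ≤ 1 / 2) (hξ : ξ ∈ unitShell m) : ‖ξ‖ ≤ 3 / 2 := by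
  linarith [norm_le_of_mem_unitShell hξ]

lemma volume_coordinate_box (a b : ι → ℝ) :
    volume {ξ : EuclideanSpace ℝ ι | ∀ i, a i ≤ ξ i ∧ ξ i ≤ b i} =
      ∏ i, ENNReal.ofReal (b i - a i) := by
  rw [← Real.volume_Icc_pi, ← (PiLp.volume_preserving_ofLp ι).measure_preimage
    measurableSet_Icc.nullMeasurableSet]
  congr 1
  ext ξ
  simp [Set.mem_Icc, Pi.le_def, forall_and]

lemma prod_capScale [DecidableEq ι] (T : Finset ι) (δ ρ : ℝ) :
    ∏ i, capScale T δ ρ i = δ ^ T.card * ρ ^ Tᶜ.card := by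
  simp [capScale, Finset.prod_ite, Finset.filter_not, Finset.compl_eq_univ_sdiff]

lemma prod_ofReal_mul_capScale_one [DecidableEq ι] (hδ : 0 < δ) (hτ : 0 ≤ τ) :
    ∏ i, ENNReal.ofReal (τ * capScale T δ 1 i) =
      ENNReal.ofReal (τ ^ Fintype.card ι * δ ^ T.card) := by
  rw [← ENNReal.ofReal_prod_of_nonneg fun i _ => mul_nonneg hτ (capScale_pos hδ one_pos i).le,
    Finset.prod_mul_distrib, prod_capScale, Finset.prod_const, Finset.card_univ, one_pow, mul_one]

lemma measureReal_capCone_inter_ball_le (hδ : 0 < δ) :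
    volume.real (capCone T δ ∩ Metric.ball 0 1) ≤ 2 ^ Fintype.card ι * δ ^ T.card := by
  classical
  refine ENNReal.toReal_le_of_le_ofReal (by positivity) ?_
  calc
    _ ≤ volume {ξ : EuclideanSpace ℝ ι |
          ∀ i, -capScale T δ 1 i ≤ ξ i ∧ ξ i ≤ capScale T δ 1 i} := by
      refine measure_mono fun ξ ⟨hξ, hξ1⟩ i => abs_le.1 ?_
      have norm_le : ‖ξ‖ ≤ 1 := (mem_ball_zero_iff.1 hξ1).le
      unfold capScale
      split_ifs with hi
      · exact (abs_apply_le_mul_norm_of_mem_capCone hδ.le hξ hi).trans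
          (mul_le_of_le_one_right hδ.le norm_le)
      · exact (PiLp.norm_apply_le ξ i).trans norm_le
    _ = _ := by
      simp_rw [volume_coordinate_box, sub_neg_eq_add, ← two_mul]
      exact prod_ofReal_mul_capScale_one hδ zero_le_two

lemma norm_sq_le_of_forall_ne_abs_le (h : ∀ i ≠ L, |ξ i| ≤ τ) :
    ‖ξ‖ ^ 2 ≤ ξ L ^ 2 + Fintype.card ι * τ ^ 2 := by
  classical
  rw [EuclideanSpace.real_norm_sq_eq, ← Finset.add_sum_erase _ _ (Finset.mem_univ L)]
  gcongr
  calc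
    _ ≤ ∑ _i ∈ Finset.univ.erase L, τ ^ 2 := Finset.sum_le_sum fun i hi =>
      sq_le_sq' (abs_le.1 (h i (Finset.ne_of_mem_erase hi))).1
        (abs_le.1 (h i (Finset.ne_of_mem_erase hi))).2
    _ ≤ _ := by
      rw [Finset.sum_const, nsmul_eq_mul]
      gcongr
      exact Finset.card_le_univ _

lemma mem_capSector_inter_ball [DecidableEq ι] (hδ : 0 < δ) (hδ1 : δ ≤ 1) (hL : L ∉ T) (hτ0 : 0 ≤ τ)
    (hτ : Fintype.card ι * τ ^ 2 ≤ 1 / 64) (hξL : 1 / 4 ≤ ξ L) (hξL' : ξ L ≤ 1 / 2)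
    (hξ : ∀ i ≠ L, |ξ i| ≤ τ * capScale T δ 1 i) :
    ξ ∈ capSector T δ L ∩ Metric.ball 0 1 := by
  have norm_sq_le : ‖ξ‖ ^ 2 ≤ ξ L ^ 2 + Fintype.card ι * τ ^ 2 := by
    refine norm_sq_le_of_forall_ne_abs_le fun i hi => (hξ i hi).trans ?_
    refine mul_le_of_le_one_right hτ0 ?_
    unfold capScale
    split_ifs
    exacts [hδ1, le_rfl]
  have quarter_le_norm : 1 / 4 ≤ ‖ξ‖ :=
    hξL.trans ((le_abs_self _).trans (PiLp.norm_apply_le ξ L))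
  have block_le : ∑ i ∈ T, ξ i ^ 2 ≤ Fintype.card ι * τ ^ 2 * δ ^ 2 := by
    calc
      _ ≤ ∑ _i ∈ T, τ ^ 2 * δ ^ 2 := Finset.sum_le_sum fun i hi => by
        have h := hξ i (ne_of_mem_of_not_mem hi hL)
        rw [capScale, if_pos hi] at h
        rw [← mul_pow]
        exact sq_le_sq' (abs_le.1 h).1 (abs_le.1 h).2
      _ ≤ _ := by
        rw [Finset.sum_const, nsmul_eq_mul, ← mul_assoc]
        gcongr
        exact Finset.card_le_univ _
  refine ⟨⟨?_, ?_⟩, ?_⟩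
  · calc
      ∑ i ∈ T, ξ i ^ 2 ≤ 1 / 64 * δ ^ 2 := block_le.trans (by gcongr)
      _ < δ ^ 2 * (1 / 4) ^ 2 := by linarith [pow_pos hδ 2]
      _ ≤ δ ^ 2 * ‖ξ‖ ^ 2 := by gcongr
  · change ‖ξ‖ ≤ 2 * ξ L
    refine le_of_sq_le_sq ?_ (by linarith)
    nlinarith
  · rw [mem_ball_zero_iff, ← sq_lt_one_iff₀ (norm_nonneg ξ)]
    nlinarith

lemma le_measureReal_capSector_inter_ball (hδ : 0 < δ) (hδ1 : δ ≤ 1) (hL : L ∉ T) :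
    (1 / (8 * Fintype.card ι)) ^ Fintype.card ι * δ ^ T.card ≤
      volume.real (capSector T δ L ∩ Metric.ball 0 1) := by
  classical
  have one_le_card : (1 : ℝ) ≤ Fintype.card ι := Nat.one_le_cast.2 (Fintype.card_pos_iff.2 ⟨L⟩)
  set τ : ℝ := 1 / (8 * Fintype.card ι) with hτ
  have τ_le : τ ≤ 1 / 8 := one_div_le_one_div_of_le (by norm_num) (by linarith)
  have τ_sq_le : Fintype.card ι * τ ^ 2 ≤ 1 / 64 := by
    have card_mul : Fintype.card ι * τ = 1 / 8 := by rw [hτ]; field_simp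
    rw [sq, ← mul_assoc, card_mul]
    linarith
  refine (ENNReal.ofReal_le_iff_le_toReal (by finiteness)).1 ?_
  calc
    _ = volume {ξ : EuclideanSpace ℝ ι | ∀ i, (if i = L then 1 / 4 else 0) ≤ ξ i ∧
          ξ i ≤ (if i = L then 1 / 4 else 0) + τ * capScale T δ 1 i} := by
      simp_rw [volume_coordinate_box, add_sub_cancel_left]
      rw [prod_ofReal_mul_capScale_one hδ (by positivity)]
    _ ≤ _ := by
      refine measure_mono fun ξ hξ => ?_
      have hξL := hξ L
      simp only [if_true, capScale, if_neg hL] at hξL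
      refine mem_capSector_inter_ball hδ hδ1 hL (by positivity) τ_sq_le hξL.1 (by linarith)
        fun i hi => ?_
      have hξi := hξ i
      simp only [if_neg hi, zero_add] at hξi
      exact (abs_of_nonneg hξi.1).trans_le hξi.2

lemma exists_finset_gridLabel_mem (R : Finset ι) (hρ : 0 < ρ) (hρ1 : ρ ≤ 1) :
    ∃ J : Finset (R → ℤ), (J.card : ℝ) ≤ (5 / ρ) ^ R.card ∧
      ∀ ξ : EuclideanSpace ℝ ι, ‖ξ‖ ≤ 3 / 2 → gridLabel R ρ ξ ∈ J := by
  classical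
  set x : ℝ := 3 / 2 / ρ with hx
  refine ⟨Fintype.piFinset fun _ => Finset.Icc ⌊-x⌋ ⌊x⌋, ?_, fun ξ hξ => ?_⟩
  · have floor_le : ⌊-x⌋ ≤ ⌊x⌋ + 1 :=
      (Int.floor_mono (neg_le_self (by positivity))).trans (by omega)
    have one_le : 1 ≤ 1 / ρ := one_le_one_div hρ hρ1
    have five_div : 5 / ρ = 2 * x + 2 * (1 / ρ) := by rw [hx]; ring
    have card_le : ((Finset.Icc ⌊-x⌋ ⌊x⌋).card : ℝ) ≤ 5 / ρ := by
      have h : ((Finset.Icc ⌊-x⌋ ⌊x⌋).card : ℝ) = ⌊x⌋ + 1 - ⌊-x⌋ :=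
        mod_cast Int.card_Icc_of_le _ _ floor_le
      linarith [Int.floor_le x, Int.lt_floor_add_one (-x)]
    rw [Fintype.card_piFinset, Finset.prod_const, Finset.card_univ, Fintype.card_coe, Nat.cast_pow]
    gcongr
  · refine Fintype.mem_piFinset.2 fun i => Finset.mem_Icc.2 ?_
    obtain ⟨h₁, h₂⟩ := abs_le.1 (abs_apply_le_three_halves hξ i)
    rw [hx, ← neg_div]
    constructor <;> exact Int.floor_mono (by gcongr)

lemma abs_sq_sub_sq_le {x y b r : ℝ} (hx : |x| ≤ b) (hy : |y| ≤ b) (hxy : |x - y| ≤ r) :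
    |x ^ 2 - y ^ 2| ≤ 2 * b * r := by
  rw [sq_sub_sq, abs_mul]
  exact mul_le_mul ((abs_add_le x y).trans (by linarith)) hxy (abs_nonneg _)
    (by linarith [abs_nonneg x])

lemma abs_norm_sq_sub_norm_sq_le (hm : m ≤ 1 / 2) (hξ : ξ ∈ unitShell m)
    (hη : η ∈ unitShell m) : |‖ξ‖ ^ 2 - ‖η‖ ^ 2| ≤ 6 * m := by
  have norm_sub : |‖ξ‖ - ‖η‖| ≤ 2 * m :=
    abs_le.2 ⟨by linarith [norm_le_of_mem_unitShell hη, le_norm_of_mem_unitShell hξ],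
      by linarith [norm_le_of_mem_unitShell hξ, le_norm_of_mem_unitShell hη]⟩
  have h := abs_sq_sub_sq_le ((abs_norm ξ).trans_le (norm_le_three_halves hm hξ))
    ((abs_norm η).trans_le (norm_le_three_halves hm hη)) norm_sub
  linarith

lemma abs_apply_sq_sub_apply_sq_le [DecidableEq ι] (hδ : 0 < δ) (hm0 : 0 < m)
    (hm : m ≤ 1 / 2)
    (hξ : ξ ∈ capCone T δ ∩ unitShell m) (hη : η ∈ capCone T δ ∩ unitShell m)
    (hlabel : gridLabel (Tᶜ.erase L) (δ ^ 2 + m) ξ = gridLabel (Tᶜ.erase L) (δ ^ 2 + m) η)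
    {i : ι} (hi : i ≠ L) : |ξ i ^ 2 - η i ^ 2| ≤ 3 * (δ ^ 2 + m) := by
  by_cases hiT : i ∈ T
  · have sq_le : ∀ ζ ∈ capCone T δ ∩ unitShell m, ζ i ^ 2 ≤ 9 / 4 * δ ^ 2 := fun ζ hζ => by
      have h := abs_apply_le_mul_norm_of_mem_capCone hδ.le hζ.1 hiT
      rw [← sq_abs]
      calc
        |ζ i| ^ 2 ≤ (δ * (3 / 2)) ^ 2 := by
          gcongr
          exact h.trans (by gcongr; exact norm_le_three_halves hm hζ.2)
        _ = _ := by ring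
    exact abs_sub_le_of_nonneg_of_le (sq_nonneg _) (by nlinarith [sq_le ξ hξ]) (sq_nonneg _)
      (by nlinarith [sq_le η hη])
  · have hi' : i ∈ Tᶜ.erase L := Finset.mem_erase.2 ⟨hi, Finset.mem_compl.2 hiT⟩
    have h := abs_sq_sub_sq_le
      (abs_apply_le_three_halves (norm_le_three_halves hm hξ.2) i)
      (abs_apply_le_three_halves (norm_le_three_halves hm hη.2) i)
      (abs_apply_sub_apply_le_of_gridLabel_eq (by positivity) hlabel hi')
    linarith

lemma abs_sq_sub_sq_le_of_forall_ne {B r : ℝ} (hB : 0 ≤ B) (hnorm : |‖ξ‖ ^ 2 - ‖η‖ ^ 2| ≤ r)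
    (h : ∀ i ≠ L, |ξ i ^ 2 - η i ^ 2| ≤ B) :
    |ξ L ^ 2 - η L ^ 2| ≤ r + Fintype.card ι * B := by
  classical
  have split : ξ L ^ 2 - η L ^ 2 =
      (‖ξ‖ ^ 2 - ‖η‖ ^ 2) - ∑ i ∈ Finset.univ.erase L, (ξ i ^ 2 - η i ^ 2) := by
    rw [EuclideanSpace.real_norm_sq_eq, EuclideanSpace.real_norm_sq_eq, ← Finset.sum_sub_distrib,
      ← Finset.add_sum_erase _ _ (Finset.mem_univ L)]
    ring
  have sum_le : |∑ i ∈ Finset.univ.erase L, (ξ i ^ 2 - η i ^ 2)| ≤ Fintype.card ι * B := by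
    calc
      _ ≤ ∑ i ∈ Finset.univ.erase L, |ξ i ^ 2 - η i ^ 2| := Finset.abs_sum_le_sum_abs _ _
      _ ≤ ∑ _i ∈ Finset.univ.erase L, B :=
        Finset.sum_le_sum fun i hi => h i (Finset.ne_of_mem_erase hi)
      _ ≤ _ := by
        rw [Finset.sum_const, nsmul_eq_mul]
        gcongr
        exact Finset.card_le_univ _
  rw [split]
  exact (abs_sub _ _).trans (add_le_add hnorm sum_le)

-- On the sector `ξ L + η L ≥ 1/2`, so a bound on the difference of squares is one on `ξ L - η L`.
lemma abs_apply_sub_apply_le_of_mem_capSector [DecidableEq ι] (hδ : 0 < δ) (hm0 : 0 < m)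
    (hm : m ≤ 1 / 2)
    (hξ : ξ ∈ capSector T δ L ∩ unitShell m) (hη : η ∈ capSector T δ L ∩ unitShell m)
    (hlabel : gridLabel (Tᶜ.erase L) (δ ^ 2 + m) ξ = gridLabel (Tᶜ.erase L) (δ ^ 2 + m) η) :
    |ξ L - η L| ≤ (12 + 6 * Fintype.card ι) * (δ ^ 2 + m) := by
  have half_le : 1 / 2 ≤ |ξ L + η L| := by
    have hξL : ‖ξ‖ ≤ 2 * ξ L := hξ.1.2
    have hηL : ‖η‖ ≤ 2 * η L := hη.1.2
    refine le_trans ?_ (le_abs_self _)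
    linarith [le_norm_of_mem_unitShell hξ.2, le_norm_of_mem_unitShell hη.2]
  have sq_sub_sq_le : |ξ L ^ 2 - η L ^ 2| ≤
      6 * m + Fintype.card ι * (3 * (δ ^ 2 + m)) :=
    abs_sq_sub_sq_le_of_forall_ne (by positivity) (abs_norm_sq_sub_norm_sq_le hm hξ.2 hη.2)
      fun i hi => abs_apply_sq_sub_apply_sq_le hδ hm0 hm ⟨hξ.1.1, hξ.2⟩ ⟨hη.1.1, hη.2⟩ hlabel hi
  rw [sq_sub_sq, abs_mul] at sq_sub_sq_le
  have := mul_le_mul_of_nonneg_right half_le (abs_nonneg (ξ L - η L))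
  linarith [sq_nonneg δ]

lemma abs_apply_sub_apply_le_mul_capScale [DecidableEq ι] (hδ : 0 < δ) (hm0 : 0 < m)
    (hm : m ≤ 1 / 2)
    (hξ : ξ ∈ capSector T δ L ∩ unitShell m) (hη : η ∈ capSector T δ L ∩ unitShell m)
    (hlabel : gridLabel (Tᶜ.erase L) (δ ^ 2 + m) ξ = gridLabel (Tᶜ.erase L) (δ ^ 2 + m) η)
    (i : ι) :
    |ξ i - η i| ≤ (12 + 6 * Fintype.card ι) * capScale T δ (δ ^ 2 + m) i := by
  have card_nonneg : (0 : ℝ) ≤ Fintype.card ι := Nat.cast_nonneg _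
  unfold capScale
  split_ifs with hiT
  · have apply_le : ∀ ζ ∈ capSector T δ L ∩ unitShell m, |ζ i| ≤ δ * (3 / 2) := fun ζ hζ =>
      (abs_apply_le_mul_norm_of_mem_capCone hδ.le hζ.1.1 hiT).trans
        (by gcongr; exact norm_le_three_halves hm hζ.2)
    have := (abs_sub _ _).trans (add_le_add (apply_le ξ hξ) (apply_le η hη))
    linarith [mul_nonneg card_nonneg hδ.le]
  · rcases eq_or_ne i L with rfl | hiL
    · exact abs_apply_sub_apply_le_of_mem_capSector hδ hm0 hm hξ hη hlabel
    · refine (abs_apply_sub_apply_le_of_gridLabel_eq (by positivity) hlabel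
        (Finset.mem_erase.2 ⟨hiL, Finset.mem_compl.2 hiT⟩)).trans ?_
      exact le_mul_of_one_le_left (by positivity) (by linarith)

end CapGeometry

section KnappFunction

variable {ι : Type*} [Fintype ι] {T : Finset ι} {δ m : ℝ} {L : ι} {a H : ℝ → ℝ}
  {F : EuclideanSpace ℝ ι → ℝ}

/-- The trial function on the Fourier side, as a real-valued function: the radial profile `a` of
the distance to the unit sphere, cut off to a shell and to the cone over a cap. -/
def knappBump (T : Finset ι) (δ m : ℝ) (a : ℝ → ℝ) : EuclideanSpace ℝ ι → ℝ :=
  (capCone T δ ∩ unitShell m).indicator fun ξ => a |‖ξ‖ - 1|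

lemma measurableSet_capCone_inter_unitShell (T : Finset ι) (δ m : ℝ) :
    MeasurableSet (capCone T δ ∩ unitShell m) :=
  (measurableSet_capCone T δ).inter (measurableSet_unitShell m)

lemma measurableSet_capSector_inter_unitShell (T : Finset ι) (δ m : ℝ) (L : ι) :
    MeasurableSet (capSector T δ L ∩ unitShell m) :=
  (measurableSet_capSector T δ L).inter (measurableSet_unitShell m)

lemma capSector_inter_unitShell_subset (T : Finset ι) (δ m : ℝ) (L : ι) :
    capSector T δ L ∩ unitShell m ⊆ capCone T δ ∩ unitShell m :=
  Set.inter_subset_inter_left _ Set.inter_subset_left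

lemma integral_knappBump_sq_mul :
    ∫ ξ, knappBump T δ m a ξ ^ 2 * F ξ =
      ∫ ξ in capCone T δ ∩ unitShell m, a |‖ξ‖ - 1| ^ 2 * F ξ := by
  rw [← integral_indicator (measurableSet_capCone_inter_unitShell T δ m)]
  congr 1 with ξ
  by_cases hξ : ξ ∈ capCone T δ ∩ unitShell m <;> simp [knappBump, hξ]

lemma mul_setIntegral_Ioo_le_setIntegral_capSector (hδ : 0 < δ) (hδ1 : δ ≤ 1) (hm : m < 1)
    (hL : L ∉ T) (hH : IntegrableOn H (Set.Ioo 0 m)) (hH0 : ∀ t ∈ Set.Ioo 0 m, 0 ≤ H t) :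
    (1 / (8 * Fintype.card ι)) ^ Fintype.card ι * δ ^ T.card * ∫ t in Set.Ioo 0 m, H t ≤
      ∫ ξ in capSector T δ L ∩ unitShell m, H |‖ξ‖ - 1| := by
  have : Nonempty ι := ⟨L⟩
  refine (mul_le_mul_of_nonneg_right (le_measureReal_capSector_inter_ball hδ hδ1 hL)
    (setIntegral_nonneg measurableSet_Ioo hH0)).trans ?_
  exact measureReal_mul_setIntegral_Ioo_le volume (isDilationInvariant_capSector T δ L)
    (measurableSet_capSector T δ L) hm hH hH0

lemma setIntegral_capCone_le_mul_setIntegral_Ioo [Nonempty ι] (hδ : 0 < δ) (hm : m < 1)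
    (hH : IntegrableOn H (Set.Ioo 0 m)) (hH0 : ∀ t ∈ Set.Ioo 0 m, 0 ≤ H t) :
    ∫ ξ in capCone T δ ∩ unitShell m, H |‖ξ‖ - 1| ≤
      Fintype.card ι * 2 ^ Fintype.card ι * 2 ^ Fintype.card ι * δ ^ T.card *
        ∫ t in Set.Ioo 0 m, H t := by
  have integral_nonneg : 0 ≤ ∫ t in Set.Ioo 0 m, H t := setIntegral_nonneg measurableSet_Ioo hH0
  calc
    _ ≤ _ := setIntegral_comp_abs_norm_sub_one_le volume (isDilationInvariant_capCone T δ)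
      (measurableSet_capCone T δ) hm hH hH0
    _ ≤ Fintype.card ι * (2 ^ Fintype.card ι * δ ^ T.card) * 2 ^ Fintype.card ι *
          ∫ t in Set.Ioo 0 m, H t := by
      rw [finrank_euclideanSpace]
      gcongr
      exact measureReal_capCone_inter_ball_le hδ
    _ = _ := by ring

lemma integrableOn_capCone_comp_abs_norm_sub_one [Nonempty ι] (T : Finset ι) (δ : ℝ) (hm : m < 1)
    (hH : IntegrableOn H (Set.Ioo 0 m)) :
    IntegrableOn (fun ξ : EuclideanSpace ℝ ι => H |‖ξ‖ - 1|) (capCone T δ ∩ unitShell m) :=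
  integrableOn_comp_abs_norm_sub_one volume (isDilationInvariant_capCone T δ)
    (measurableSet_capCone T δ) hm hH

lemma mul_setIntegral_Ioo_le_setIntegral_capCone (hδ : 0 < δ) (hδ1 : δ ≤ 1) (hm : m < 1)
    (hL : L ∉ T) (hH : IntegrableOn H (Set.Ioo 0 m)) (hH0 : ∀ t, 0 ≤ t → 0 ≤ H t) :
    (1 / (8 * Fintype.card ι)) ^ Fintype.card ι * δ ^ T.card * ∫ t in Set.Ioo 0 m, H t ≤
      ∫ ξ in capCone T δ ∩ unitShell m, H |‖ξ‖ - 1| := by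
  have : Nonempty ι := ⟨L⟩
  refine (mul_setIntegral_Ioo_le_setIntegral_capSector hδ hδ1 hm hL hH
    fun t ht => hH0 t ht.1.le).trans ?_
  exact setIntegral_mono_set (integrableOn_capCone_comp_abs_norm_sub_one T δ hm hH)
    (ae_of_all _ fun ξ => hH0 _ (abs_nonneg _))
    (capSector_inter_unitShell_subset T δ m L).eventuallyLE

variable {w h : ℝ → ℝ} {c C : ℝ}

lemma integrableOn_capCone_sq_mul_comp_norm [Nonempty ι] (T : Finset ι) (δ : ℝ) (hm : m < 1)
    (ha : Measurable a) (hw : Measurable w)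
    (hah : IntegrableOn (fun t => a t ^ 2 * h t) (Set.Ioo 0 m))
    (hwh : ∀ r, |r - 1| ≤ m → |w r| ≤ C * h |r - 1|) :
    IntegrableOn (fun ξ : EuclideanSpace ℝ ι => a |‖ξ‖ - 1| ^ 2 * w ‖ξ‖)
      (capCone T δ ∩ unitShell m) := by
  refine Integrable.mono' ((integrableOn_capCone_comp_abs_norm_sub_one T δ hm hah).const_mul C)
    (by fun_prop) (ae_restrict_of_forall_mem (measurableSet_capCone_inter_unitShell T δ m) ?_)
  intro ξ hξ
  rw [norm_mul, norm_pow, Real.norm_eq_abs, sq_abs, mul_left_comm]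
  exact mul_le_mul_of_nonneg_left (hwh _ hξ.2) (sq_nonneg _)

lemma mul_setIntegral_Ioo_le_integral_knappBump_sq_mul (hδ : 0 < δ) (hδ1 : δ ≤ 1) (hm : m < 1)
    (hL : L ∉ T) (hc : 0 ≤ c) (hh0 : ∀ t, 0 ≤ t → 0 ≤ h t)
    (hah : IntegrableOn (fun t => a t ^ 2 * h t) (Set.Ioo 0 m))
    (hint : IntegrableOn (fun ξ : EuclideanSpace ℝ ι => a |‖ξ‖ - 1| ^ 2 * w ‖ξ‖)
      (capCone T δ ∩ unitShell m))
    (hhw : ∀ r, |r - 1| ≤ m → c * h |r - 1| ≤ w r) :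
    (1 / (8 * Fintype.card ι)) ^ Fintype.card ι * c * δ ^ T.card *
        ∫ t in Set.Ioo 0 m, a t ^ 2 * h t ≤
      ∫ ξ, knappBump T δ m a ξ ^ 2 * w ‖ξ‖ := by
  have : Nonempty ι := ⟨L⟩
  rw [integral_knappBump_sq_mul]
  calc
    _ = c * ((1 / (8 * Fintype.card ι)) ^ Fintype.card ι * δ ^ T.card *
          ∫ t in Set.Ioo 0 m, a t ^ 2 * h t) := by ring
    _ ≤ c * ∫ ξ in capCone T δ ∩ unitShell m, a |‖ξ‖ - 1| ^ 2 * h |‖ξ‖ - 1| := by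
      gcongr
      exact mul_setIntegral_Ioo_le_setIntegral_capCone hδ hδ1 hm hL hah
        fun t ht => mul_nonneg (sq_nonneg _) (hh0 t ht)
    _ = ∫ ξ in capCone T δ ∩ unitShell m, c * (a |‖ξ‖ - 1| ^ 2 * h |‖ξ‖ - 1|) :=
      (integral_const_mul _ _).symm
    _ ≤ _ := by
      refine setIntegral_mono_on
        ((integrableOn_capCone_comp_abs_norm_sub_one T δ hm hah).const_mul c) hint
        (measurableSet_capCone_inter_unitShell T δ m) fun ξ hξ => ?_
      rw [mul_left_comm]
      exact mul_le_mul_of_nonneg_left (hhw _ hξ.2) (sq_nonneg _)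

lemma integral_knappBump_sq_mul_le_mul_setIntegral_Ioo [Nonempty ι] (hδ : 0 < δ) (hm : m < 1)
    (hC : 0 ≤ C) (hh0 : ∀ t, 0 ≤ t → 0 ≤ h t)
    (hah : IntegrableOn (fun t => a t ^ 2 * h t) (Set.Ioo 0 m))
    (hint : IntegrableOn (fun ξ : EuclideanSpace ℝ ι => a |‖ξ‖ - 1| ^ 2 * w ‖ξ‖)
      (capCone T δ ∩ unitShell m))
    (hwh : ∀ r, |r - 1| ≤ m → w r ≤ C * h |r - 1|) :
    ∫ ξ, knappBump T δ m a ξ ^ 2 * w ‖ξ‖ ≤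
      Fintype.card ι * 2 ^ Fintype.card ι * 2 ^ Fintype.card ι * C * δ ^ T.card *
        ∫ t in Set.Ioo 0 m, a t ^ 2 * h t := by
  rw [integral_knappBump_sq_mul]
  calc
    _ ≤ ∫ ξ in capCone T δ ∩ unitShell m, C * (a |‖ξ‖ - 1| ^ 2 * h |‖ξ‖ - 1|) := by
      refine setIntegral_mono_on hint
        ((integrableOn_capCone_comp_abs_norm_sub_one T δ hm hah).const_mul C)
        (measurableSet_capCone_inter_unitShell T δ m) fun ξ hξ => ?_
      rw [mul_left_comm C]
      exact mul_le_mul_of_nonneg_left (hwh _ hξ.2) (sq_nonneg _)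
    _ = C * ∫ ξ in capCone T δ ∩ unitShell m, a |‖ξ‖ - 1| ^ 2 * h |‖ξ‖ - 1| :=
      integral_const_mul _ _
    _ ≤ C * (Fintype.card ι * 2 ^ Fintype.card ι * 2 ^ Fintype.card ι * δ ^ T.card *
          ∫ t in Set.Ioo 0 m, a t ^ 2 * h t) := by
      gcongr
      exact setIntegral_capCone_le_mul_setIntegral_Ioo hδ hm hah
        fun t ht => mul_nonneg (sq_nonneg _) (hh0 t ht.1.le)
    _ = _ := by ring

lemma integrable_knappBump [Nonempty ι] (T : Finset ι) (δ : ℝ) (hm : m < 1)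
    (ha : IntegrableOn a (Set.Ioo 0 m)) : Integrable (knappBump T δ m a) :=
  (integrable_indicator_iff (measurableSet_capCone_inter_unitShell T δ m)).2
    (integrableOn_capCone_comp_abs_norm_sub_one T δ hm ha)

lemma mul_setIntegral_Ioo_le_setIntegral_knappBump (hδ : 0 < δ) (hδ1 : δ ≤ 1) (hm : m < 1)
    (hL : L ∉ T) (ha : IntegrableOn a (Set.Ioo 0 m)) (ha0 : ∀ t ∈ Set.Ioo 0 m, 0 ≤ a t) :
    (1 / (8 * Fintype.card ι)) ^ Fintype.card ι * δ ^ T.card * ∫ t in Set.Ioo 0 m, a t ≤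
      ∫ ξ in capSector T δ L ∩ unitShell m, knappBump T δ m a ξ := by
  refine (mul_setIntegral_Ioo_le_setIntegral_capSector hδ hδ1 hm hL ha ha0).trans_eq
    (setIntegral_congr_fun (measurableSet_capSector_inter_unitShell T δ m L) fun ξ hξ => ?_)
  exact (Set.indicator_of_mem (capSector_inter_unitShell_subset T δ m L hξ)
    fun ξ => a |‖ξ‖ - 1|).symm

lemma rpow_neg_half_mul_rpow_mul_eq {ρ : ℝ} (hδ : 0 < δ) (hρ : 0 < ρ) (p : ℝ) (r u : ℕ) :
    ((5 / ρ) ^ r) ^ (-1 / 2 : ℝ) * (δ ^ u * ρ ^ (r + 1)) ^ (-1 / p) * δ ^ u =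
      (5 ^ r) ^ (-1 / 2 : ℝ) * δ ^ (u * (1 - 1 / p)) * ρ ^ ((r : ℝ) / 2 - (r + 1) / p) := by
  have grid : ((5 / ρ) ^ r) ^ (-1 / 2 : ℝ) = (5 ^ r) ^ (-1 / 2 : ℝ) * ρ ^ ((r : ℝ) / 2) := by
    rw [div_pow, Real.div_rpow (by positivity) (by positivity), ← Real.rpow_natCast ρ,
      ← Real.rpow_mul hρ.le, div_eq_mul_inv, ← Real.rpow_neg hρ.le]
    ring_nf
  have box : (δ ^ u * ρ ^ (r + 1)) ^ (-1 / p) = δ ^ (-(u / p)) * ρ ^ (-((r + 1) / p)) := by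
    rw [Real.mul_rpow (by positivity) (by positivity), ← Real.rpow_natCast δ,
      ← Real.rpow_natCast ρ, ← Real.rpow_mul hδ.le, ← Real.rpow_mul hρ.le]
    push_cast
    ring_nf
  have split_δ : δ ^ (u * (1 - 1 / p)) = δ ^ u * δ ^ (-(u / p)) := by
    rw [← Real.rpow_natCast δ, ← Real.rpow_add hδ]
    ring_nf
  rw [grid, box, split_δ, sub_eq_add_neg ((r : ℝ) / 2), Real.rpow_add hρ]
  ring

/-- The constant in the `L^p` lower bound in dimension `n`: the Gaussian loss over a box, the number
`5 ^ (k - 1)` of boxes at unit scale, and the volume of the sector at `δ = 1`. -/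
def knappConstant (n k : ℕ) : ℝ :=
  exp (-(n * (π * (12 + 6 * n) ^ 2)) / 2) * (5 ^ (k - 1)) ^ (-1 / 2 : ℝ) * (1 / (8 * n)) ^ n

lemma knappConstant_pos {n : ℕ} (hn : 0 < n) (k : ℕ) : 0 < knappConstant n k := by
  unfold knappConstant
  positivity

variable [DecidableEq ι]

theorem ofReal_mul_setIntegral_le_eLpNorm_fourierInv_knappBump {p : ℝ} (hp : 2 ≤ p) (hδ : 0 < δ)
    (hδ1 : δ ≤ 1 / 2) (hm0 : 0 < m) (hm : m ≤ 1 / 2) (hL : L ∉ T)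
    (ha : IntegrableOn a (Set.Ioo 0 m)) (ha0 : ∀ t, 0 ≤ a t) :
    ENNReal.ofReal (knappConstant (Fintype.card ι) Tᶜ.card * δ ^ (T.card * (1 - 1 / p)) *
        (δ ^ 2 + m) ^ (((Tᶜ.card : ℝ) - 1) / 2 - Tᶜ.card / p) * ∫ t in Set.Ioo 0 m, a t) ≤
      eLpNorm (𝓕⁻ fun ξ => (knappBump T δ m a ξ : ℂ)) (ENNReal.ofReal p) volume := by
  have : Nonempty ι := ⟨L⟩
  have hρ : 0 < δ ^ 2 + m := by positivity
  obtain ⟨J, hJ, hmem⟩ := exists_finset_gridLabel_mem (Tᶜ.erase L) hρ (by nlinarith)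
  refine le_trans (ENNReal.ofReal_le_ofReal ?_) (ofReal_setIntegral_le_eLpNorm_fourierInv hp
    (integrable_knappBump T δ (by linarith) ha) (Set.indicator_nonneg fun ξ _ => ha0 _)
    (capScale_pos hδ hρ) (measurableSet_capSector_inter_unitShell T δ m L)
    (measurable_gridLabel _ _) (fun ξ hξ => hmem ξ (norm_le_three_halves hm hξ.2)) (by positivity)
    hJ fun ξ hξ η hη => abs_apply_sub_apply_le_mul_capScale hδ hm0 hm hξ hη)
  have card_compl : Tᶜ.card = (Tᶜ.erase L).card + 1 :=
    (Finset.card_erase_add_one (Finset.mem_compl.2 hL)).symm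
  have exponents := rpow_neg_half_mul_rpow_mul_eq hδ hρ p (Tᶜ.erase L).card T.card
  rw [prod_capScale, knappConstant, card_compl, Nat.add_sub_cancel, Nat.cast_succ,
    add_sub_cancel_right]
  refine le_trans (le_of_eq ?_) (mul_le_mul_of_nonneg_left
    (mul_setIntegral_Ioo_le_setIntegral_knappBump hδ (by linarith) (by linarith) hL ha
      fun t _ => ha0 t) (by positivity))
  linear_combination (-(exp (-(Fintype.card ι * (π * (12 + 6 * Fintype.card ι) ^ 2)) / 2) *
    (1 / (8 * Fintype.card ι)) ^ Fintype.card ι * ∫ t in Set.Ioo 0 m, a t)) * exponents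

end KnappFunction

section KnappFT

variable {d k : ℕ} {s γ p c C ε δ m : ℝ} {a : ℝ → ℝ} {g : ℝ → ℝ → ℝ}

/-- The indices of the first block of coordinates in `ℝ^d = ℝ^{d-k} × ℝ^k`. -/
def firstBlock (d k : ℕ) : Finset (Fin d) := {i | (i : ℕ) < d - k}

lemma card_firstBlock (d k : ℕ) : (firstBlock d k).card = d - k := by
  simp [firstBlock, Fin.card_filter_val_lt]

lemma cast_card_firstBlock (hkd : k ≤ d) : ((firstBlock d k).card : ℝ) = d - k := by
  rw [card_firstBlock, Nat.cast_sub hkd]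

lemma card_compl_firstBlock (hkd : k ≤ d) : (firstBlock d k)ᶜ.card = k := by
  rw [Finset.card_compl, card_firstBlock, Fintype.card_fin, Nat.sub_sub_self hkd]

lemma exists_notMem_firstBlock (hk : 1 ≤ k) (hkd : k ≤ d) : ∃ L, L ∉ firstBlock d k := by
  have card_pos : 0 < (firstBlock d k)ᶜ.card := by rwa [card_compl_firstBlock hkd]
  exact (Finset.card_pos.1 card_pos).imp fun _ => Finset.mem_compl.1

lemma knappFT_eq_ofReal_knappBump (d k : ℕ) (m δ : ℝ) (a : ℝ → ℝ) :
    knappFT d k m δ a = fun ξ => (knappBump (firstBlock d k) δ m a ξ : ℂ) := by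
  classical
  ext ξ
  have mem_iff : ξ ∈ capCone (firstBlock d k) δ ∩ unitShell m ↔
      |‖ξ‖ - 1| ≤ m ∧ blockSq d k ξ < δ ^ 2 * ‖ξ‖ ^ 2 := by
    simp only [capCone, unitShell, firstBlock, blockSq, Finset.sum_filter, Set.mem_inter_iff,
      Set.mem_ofPred_eq, and_comm]
  simp only [knappFT, knappBump, Set.indicator_apply, mem_iff]
  split_ifs <;> simp

lemma norm_knappFT_sq (d k : ℕ) (m δ : ℝ) (a : ℝ → ℝ) (ξ : Rd d) :
    ‖knappFT d k m δ a ξ‖ ^ 2 = knappBump (firstBlock d k) δ m a ξ ^ 2 := by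
  rw [knappFT_eq_ofReal_knappBump, Complex.norm_real, Real.norm_eq_abs, sq_abs]

lemma integrableOn_sq_mul_const_add_rpow (hγ : 0 ≤ γ) (hm : m ≤ 1)
    (ha2 : IntegrableOn (fun t => a t ^ 2) (Set.Ioo 0 m)) (ε : ℝ) :
    IntegrableOn (fun t => a t ^ 2 * (ε + t ^ γ)) (Set.Ioo 0 m) := by
  refine ha2.mul_bdd (c := |ε| + 1) (by fun_prop)
    (ae_restrict_of_forall_mem measurableSet_Ioo fun t ht => ?_)
  refine (norm_add_le _ _).trans (add_le_add le_rfl ?_)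
  rw [Real.norm_of_nonneg (Real.rpow_nonneg ht.1.le γ)]
  exact Real.rpow_le_one ht.1.le (ht.2.le.trans hm) hγ

lemma integrableOn_Ioo_of_sq (ha : Measurable a)
    (ha2 : IntegrableOn (fun t => a t ^ 2) (Set.Ioo 0 m)) : IntegrableOn a (Set.Ioo 0 m) :=
  ((memLp_two_iff_integrable_sq ha.aestronglyMeasurable).2 ha2).integrable one_le_two

lemma nonneg_of_isAdmissible (hg : IsAdmissible s γ c C g) : 0 ≤ C := by
  have hε : (1 / 2 : ℝ) ∈ Set.Ioo (0 : ℝ) 1 := by norm_num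
  have upper := (hg.2.2.2 _ hε 1 (by norm_num)).2
  have weight_pos : 0 < 1 / 2 + |(1 : ℝ) - 1| ^ γ := by positivity
  exact nonneg_of_mul_nonneg_left ((hg.2.1 _ hε 1).le.trans upper) weight_pos

theorem quadraticForm_knappFT_bounds (hk : 1 ≤ k) (hkd : k ≤ d) (hγ : 0 ≤ γ) (hc : 0 ≤ c)
    (hg : IsAdmissible s γ c C g) (hε : ε ∈ Set.Ioo (0 : ℝ) 1) (hδ : 0 < δ) (hδ1 : δ ≤ 1)
    (hm : m ≤ 1 / 2) (ha : Measurable a) (ha2 : IntegrableOn (fun t => a t ^ 2) (Set.Ioo 0 m)) :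
    (1 / (8 * d)) ^ d * c * δ ^ ((d : ℝ) - k) * (∫ t in Set.Ioo 0 m, a t ^ 2 * (ε + t ^ γ)) ≤
        (∫ ξ : Rd d, ‖knappFT d k m δ a ξ‖ ^ 2 * g ε ‖ξ‖) ∧
      (∫ ξ : Rd d, ‖knappFT d k m δ a ξ‖ ^ 2 * g ε ‖ξ‖) ≤
        d * 2 ^ d * 2 ^ d * C * δ ^ ((d : ℝ) - k) *
          ∫ t in Set.Ioo 0 m, a t ^ 2 * (ε + t ^ γ) := by
  obtain ⟨L, hL⟩ := exists_notMem_firstBlock hk hkd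
  have : Nonempty (Fin d) := ⟨L⟩
  have weight_nonneg : ∀ t : ℝ, 0 ≤ t → 0 ≤ ε + t ^ γ := fun t ht =>
    add_nonneg hε.1.le (Real.rpow_nonneg ht γ)
  have hah := integrableOn_sq_mul_const_add_rpow hγ (by linarith) ha2 ε
  have near_sphere : ∀ r, |r - 1| ≤ m → _ := fun r hr => hg.2.2.2 ε hε r (hr.trans hm)
  have hint := integrableOn_capCone_sq_mul_comp_norm (firstBlock d k) δ (by linarith) ha
    (hg.1 ε hε) hah fun r hr =>
      (abs_of_pos (hg.2.1 ε hε r)).trans_le (near_sphere r hr).2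
  simp_rw [norm_knappFT_sq]
  rw [← cast_card_firstBlock hkd, Real.rpow_natCast]
  constructor
  · simpa using mul_setIntegral_Ioo_le_integral_knappBump_sq_mul hδ hδ1 (by linarith) hL hc
      weight_nonneg hah hint fun r hr => (near_sphere r hr).1
  · simpa using integral_knappBump_sq_mul_le_mul_setIntegral_Ioo hδ (by linarith)
      (nonneg_of_isAdmissible hg) weight_nonneg hah hint fun r hr => (near_sphere r hr).2

theorem ofReal_knappConstant_mul_le_eLpNorm_fourierInv_knappFT (hk : 1 ≤ k) (hkd : k ≤ d)
    (hp : 2 ≤ p) (hδ : 0 < δ) (hδ1 : δ ≤ 1 / 2) (hm0 : 0 < m) (hm : m ≤ 1 / 2)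
    (ha : IntegrableOn a (Set.Ioo 0 m)) (ha0 : ∀ t, 0 ≤ a t) :
    ENNReal.ofReal (knappConstant d k * δ ^ (((d : ℝ) - k) * (1 - 1 / p)) *
        (δ ^ 2 + m) ^ (((k : ℝ) - 1) / 2 - k / p) * ∫ t in Set.Ioo 0 m, a t) ≤
      eLpNorm (𝓕⁻ (knappFT d k m δ a)) (ENNReal.ofReal p) volume := by
  obtain ⟨L, hL⟩ := exists_notMem_firstBlock hk hkd
  have h := ofReal_mul_setIntegral_le_eLpNorm_fourierInv_knappBump hp hδ hδ1 hm0 hm hL ha ha0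
  rwa [cast_card_firstBlock hkd, card_compl_firstBlock hkd, Fintype.card_fin,
    ← knappFT_eq_ofReal_knappBump] at h

end KnappFT

theorem stmt8_general (d k : ℕ) (s γ p c C : ℝ) (hk : 1 ≤ k) (hkd : k ≤ d) (hγ : 0 ≤ γ)
    (hp : 2 ≤ p) (hc : 0 < c) :
    ∃ c' C' ε₀ δ₀ m₀ : ℝ, 0 < c' ∧ c' ≤ C' ∧
      0 < ε₀ ∧ ε₀ ≤ 1 / 2 ∧ 0 < δ₀ ∧ δ₀ ≤ 1 / 2 ∧ 0 < m₀ ∧ m₀ ≤ 1 / 2 ∧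
      ∀ g : ℝ → ℝ → ℝ, IsAdmissible s γ c C g →
      ∀ ε δ m : ℝ, 0 < ε → ε < ε₀ → 0 < δ → δ < δ₀ → 0 < m → m ≤ m₀ →
      ∀ a : ℝ → ℝ, Measurable a → (∀ t, 0 ≤ a t) →
        IntegrableOn (fun t => a t ^ 2) (Set.Ioo 0 m) volume →
        (c' * δ ^ ((d : ℝ) - (k : ℝ)) * ∫ t in Set.Ioo (0 : ℝ) m, a t ^ 2 * (ε + t ^ γ))
            ≤ (∫ ξ : Rd d, ‖knappFT d k m δ a ξ‖ ^ 2 * g ε ‖ξ‖) ∧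
          (∫ ξ : Rd d, ‖knappFT d k m δ a ξ‖ ^ 2 * g ε ‖ξ‖)
            ≤ C' * δ ^ ((d : ℝ) - (k : ℝ)) * (∫ t in Set.Ioo (0 : ℝ) m, a t ^ 2 * (ε + t ^ γ)) ∧
          ENNReal.ofReal (c' * δ ^ (((d : ℝ) - (k : ℝ)) * (1 - 1 / p))
                * (δ ^ 2 + m) ^ (((k : ℝ) - 1) / 2 - (k : ℝ) / p)
                * ∫ t in Set.Ioo (0 : ℝ) m, a t)
            ≤ eLpNorm (𝓕⁻ (knappFT d k m δ a)) (ENNReal.ofReal p) volume := by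
  have hd : 0 < d := hk.trans hkd
  set c' : ℝ := min (knappConstant d k) ((1 / (8 * d)) ^ d * c)
  refine ⟨c', max c' (d * 2 ^ d * 2 ^ d * C), 1 / 2, 1 / 2, 1 / 2,
    lt_min (knappConstant_pos hd k) (by positivity), le_max_left _ _, by norm_num, le_rfl,
    by norm_num, le_rfl, by norm_num, le_rfl, ?_⟩
  intro g hg ε δ m hε hε₀ hδ hδ₀ hm hm₀ a ha ha0 ha2
  obtain ⟨form_lower, form_upper⟩ := quadraticForm_knappFT_bounds hk hkd hγ hc.le hg
    ⟨hε, by linarith⟩ hδ (by linarith) hm₀ ha ha2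
  have form_nonneg : 0 ≤ ∫ t in Set.Ioo 0 m, a t ^ 2 * (ε + t ^ γ) :=
    setIntegral_nonneg measurableSet_Ioo fun t ht =>
      mul_nonneg (sq_nonneg _) (add_nonneg hε.le (Real.rpow_nonneg ht.1.le γ))
  have mass_nonneg : 0 ≤ ∫ t in Set.Ioo 0 m, a t := integral_nonneg ha0
  refine ⟨le_trans ?_ form_lower, form_upper.trans ?_, le_trans (ENNReal.ofReal_le_ofReal ?_)
    (ofReal_knappConstant_mul_le_eLpNorm_fourierInv_knappFT hk hkd hp hδ hδ₀.le hm hm₀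
      (integrableOn_Ioo_of_sq ha ha2) ha0)⟩ <;> gcongr
  exacts [min_le_right _ _, le_max_right _ _, min_le_left _ _]

/-- Lemma 2.5: two-sided bounds for `q_ε(v)` and the lower bound for
`‖v‖_p` for the `G_k`-symmetric Knapp trial function `v = 𝓕⁻¹(knappFT)`. -/
theorem stmt8 (d k : ℕ) (hd : 2 ≤ d) (hk1 : 1 ≤ k) (hkd : k ≤ d - 1)
    (s γ p c C : ℝ)
    (hs : (d : ℝ) / ((d : ℝ) + 1) < s) (hγ : 1 < γ)
    (hp : 2 < p) (hpk : 2 ≤ k → p < 2 * (k : ℝ) / ((k : ℝ) - 1))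
    (hc : 0 < c) (hcC : c ≤ C) :
    ∃ c' C' ε₀ δ₀ m₀ : ℝ, 0 < c' ∧ c' ≤ C' ∧
      0 < ε₀ ∧ ε₀ ≤ 1/2 ∧ 0 < δ₀ ∧ δ₀ ≤ 1/2 ∧ 0 < m₀ ∧ m₀ ≤ 1/2 ∧
      ∀ g : ℝ → ℝ → ℝ, IsAdmissible s γ c C g →
      ∀ ε δ m : ℝ, 0 < ε → ε < ε₀ → 0 < δ → δ < δ₀ → 0 < m → m ≤ m₀ →
      ∀ a : ℝ → ℝ, Measurable a → (∀ t, 0 ≤ a t) →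
        IntegrableOn (fun t => a t ^ 2) (Set.Ioo 0 m) volume →
        (c' * δ ^ ((d : ℝ) - (k : ℝ)) * ∫ t in Set.Ioo (0:ℝ) m, a t ^ 2 * (ε + t ^ γ))
            ≤ (∫ ξ : Rd d, ‖knappFT d k m δ a ξ‖ ^ 2 * g ε ‖ξ‖) ∧
          (∫ ξ : Rd d, ‖knappFT d k m δ a ξ‖ ^ 2 * g ε ‖ξ‖)
            ≤ C' * δ ^ ((d : ℝ) - (k : ℝ)) * (∫ t in Set.Ioo (0:ℝ) m, a t ^ 2 * (ε + t ^ γ)) ∧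
          ENNReal.ofReal (c' * δ ^ (((d : ℝ) - (k : ℝ)) * (1 - 1/p))
                * (δ ^ 2 + m) ^ (((k : ℝ) - 1) / 2 - (k : ℝ) / p)
                * ∫ t in Set.Ioo (0:ℝ) m, a t)
            ≤ eLpNorm (𝓕⁻ (knappFT d k m δ a)) (ENNReal.ofReal p) volume :=
  stmt8_general d k s γ p c C hk1 (by omega) (by linarith) hp.le hc
end
end

section
/- Assume d ≥ 2 and 2 < p < ∞. Let (g_ε) be (s,γ)-admissible for some s > d/(d+1) and γ > 1. Then there exist constants 0 < c' ≤ C' < ∞ and thresholds ε₀, m₀ ∈ (0,1/2], depending only on d, p, s, γ and the admissibility constants, with the following property: for all ε ∈ (0,ε₀), m ∈ (0,m₀], and every nonnegative measurable a : (0,∞) → [0,∞) with ∫_0^m a(t)² dt < ∞, the radial function v ∈ L²(ℝ^d) defined by v̂(ξ) = 1_{||ξ|−1| ≤ m} · a(||ξ|−1|) satisfies c' ∫_0^m a(t)²(ε+t^γ) dt ≤ q_ε(v) ≤ C' ∫_0^m a(t)²(ε+t^γ) dt, and ‖v‖_{L^p(ℝ^d)} ≥ c' (∫_0^m a(t) dt)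 · F(m), where F(m) := m^{(d−1)/2 − d/p} if 2 < p < 2d/(d−1), F(m) := |log m|^{1/p} if p = 2d/(d−1), and F(m) := 1 if p > 2d/(d−1). -/
open MeasureTheory Real Filter
open scoped ENNReal FourierTransform RealInnerProductSpace Topology

noncomputable section

/-- The radial trial function on the Fourier side: `V(ξ) = 1_{||ξ|-1| ≤ m} · a(||ξ|-1|)`. -/
def radialFT (d : ℕ) (m : ℝ) (a : ℝ → ℝ) : Rd d → ℂ := fun ξ =>
  if |‖ξ‖ - 1| ≤ m then ((a |‖ξ‖ - 1| : ℝ) : ℂ) else 0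

/-!
In polar coordinates `q_ε(v)` becomes a one-dimensional integral over `|r - 1| ≤ m`, where
`r ^ (d - 1)` is comparable to `1` and `g_ε(r)` to `ε + |r - 1| ^ γ`; this gives the two-sided
bound.

For the `L^p` bound, `v(x)` is up to a constant the integral of
`1_{|r - 1| ≤ m} a(|r - 1|) r ^ (d - 1) J(2π|x|r)` over `r > 0`, where
`J(z) = ∫₀^π cos (z cos θ) sinᵏ θ dθ` with `k = d - 2` is a Bessel function up to a power of `z`.
The function `w(z) = z ^ ((k + 1) / 2) J(z)` satisfies `w'' + (1 + O(z⁻²)) w = 0`. Its energy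
`w² + w'²` is therefore bounded above and below, so every interval of fixed length contains a point
where `|w|` is large, and `|w'| ≲ 1` keeps it large on a neighbourhood of fixed size. This produces
shells `| |x| - ρᵢ | ≤ h` with `ρᵢ ∈ [2i, 2i + 1]` on which `|J(2π|x|)| ≳ i ^ (-(d - 1) / 2)`. As
long as `i ≤ h / m`, the argument `2π|x|r` stays in the good neighbourhood for all `|r - 1| ≤ m`,
hence there is no cancellation and `|v(x)| ≳ i ^ (-(d - 1) / 2) ∫ a`. Summing the contributions of
the shells, each of volume `≈ i ^ (d - 1)`, gives
`‖v‖_p^p ≳ (∫ a) ^ p * ∑_{i ≤ h / m} i ^ ((d - 1) - (d - 1) p / 2)`, and the three cases of `F(m)`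
are the three regimes of this sum.
-/

section RadialIntegration

lemma map_norm_addHaar {E : Type*} [NormedAddCommGroup E] [NormedSpace ℝ E]
    [FiniteDimensional ℝ E] [Nontrivial E] [MeasurableSpace E] [BorelSpace E]
    (μ : Measure E) [μ.IsAddHaarMeasure] :
    μ.map norm = μ.toSphere Set.univ •
      (volume.restrict (Set.Ioi 0)).withDensity
        fun r : ℝ => ENNReal.ofReal (r ^ (Module.finrank ℝ E - 1)) := by
  set n := Module.finrank ℝ E - 1
  have radial_part : (Measure.volumeIoiPow n).map Subtype.val =
      (volume.restrict (Set.Ioi 0)).withDensity fun r : ℝ => ENNReal.ofReal (r ^ n) := by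
    ext t ht
    rw [Measure.map_apply measurable_subtype_coe ht, Measure.volumeIoiPow,
      withDensity_apply _ (measurable_subtype_coe ht), withDensity_apply _ ht,
      ← map_comap_subtype_coe measurableSet_Ioi, Measure.restrict_map measurable_subtype_coe ht,
      lintegral_map (by fun_prop) measurable_subtype_coe]
  calc μ.map norm
      = (μ.comap ((↑) : ({0}ᶜ : Set E) → E)).map (norm ∘ Subtype.val) := by
        rw [← Measure.map_map measurable_norm measurable_subtype_coe,
          map_comap_subtype_coe (measurableSet_singleton 0).compl,
          restrict_compl_singleton]
    _ = (μ.toSphere.prod (Measure.volumeIoiPow n)).map (Subtype.val ∘ Prod.snd) := by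
        rw [← μ.measurePreserving_homeomorphUnitSphereProd.map_eq,
          Measure.map_map (by fun_prop) (homeomorphUnitSphereProd E).measurable]
        congr 1
        ext x
        simp
    _ = _ := by
        rw [← Measure.map_map measurable_subtype_coe measurable_snd, Measure.map_snd_prod,
          Measure.map_smul, radial_part]

lemma measurePreserving_zero_tail (n : ℕ) :
    MeasurePreserving (fun v : Rd (n + 1) => (v 0, WithLp.toLp 2 (Fin.tail v.ofLp)))
      volume (volume : Measure (ℝ × Rd n)) :=
  (((MeasurePreserving.id volume).prod (PiLp.volume_preserving_toLp (Fin n))).comp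
    (volume_preserving_piFinSuccAbove (fun _ => ℝ) 0)).comp
      (PiLp.volume_preserving_ofLp (Fin (n + 1)))

lemma norm_eq_sqrt_zero_tail {n : ℕ} (v : Rd (n + 1)) :
    ‖v‖ = √(v 0 ^ 2 + ‖WithLp.toLp 2 (Fin.tail v.ofLp)‖ ^ 2) := by
  rw [EuclideanSpace.norm_eq, EuclideanSpace.norm_sq_eq, Fin.sum_univ_succ]
  simp [Fin.tail]

/-- The surface area of the unit sphere of `ℝⁿ`; it equals `2` for `n = 1`. -/
def sphereArea (n : ℕ) : ℝ := (volume : Measure (Rd n)).toSphere.real Set.univ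

lemma sphereArea_pos (n : ℕ) : 0 < sphereArea (n + 1) := by
  rw [sphereArea, Measure.toSphere_real_apply_univ, finrank_euclideanSpace_fin]
  exact mul_pos (by positivity)
    (ENNReal.toReal_pos (Metric.measure_ball_pos _ _ one_pos).ne' measure_ball_lt_top.ne)

variable {F : Type*} [NormedAddCommGroup F] [NormedSpace ℝ F]

lemma integral_radial_eq (n : ℕ) (f : ℝ → F) :
    ∫ v : Rd (n + 1), f ‖v‖ = sphereArea (n + 1) • ∫ r in Set.Ioi 0, r ^ n • f r := by
  rw [integral_fun_norm_addHaar, sphereArea, Measure.toSphere_real_apply_univ,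
    ← Nat.cast_smul_eq_nsmul ℝ, smul_smul]
  simp

lemma integrable_radial_iff (n : ℕ) {f : ℝ → F} :
    Integrable (fun v : Rd (n + 1) => f ‖v‖) ↔
      IntegrableOn (fun r => r ^ n • f r) (Set.Ioi 0) := by
  simpa using integrable_fun_norm_addHaar (E := Rd (n + 1)) volume (f := f)

lemma integral_zero_norm_tail (k : ℕ) {G : ℝ × ℝ → F} (hG : StronglyMeasurable G) :
    ∫ v : Rd (k + 2), G (v 0, ‖WithLp.toLp 2 (Fin.tail v.ofLp)‖) =
      sphereArea (k + 1) • ∫ q in Set.univ ×ˢ Set.Ioi 0, q.2 ^ k • G q := by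
  have law_eq : (volume : Measure (ℝ × Rd (k + 1))).map (Prod.map id norm) =
      (volume : Measure (Rd (k + 1))).toSphere Set.univ •
        (volume.restrict (Set.univ ×ˢ Set.Ioi 0)).withDensity
          fun q : ℝ × ℝ => ENNReal.ofReal (q.2 ^ k) := by
    rw [Measure.volume_eq_prod, ← Measure.map_prod_map _ _ measurable_id measurable_norm,
      Measure.map_id, map_norm_addHaar, Measure.prod_smul_right,
      prod_withDensity_right (by fun_prop), Measure.volume_eq_prod, ← Measure.prod_restrict,
      Measure.restrict_univ]
    simp
  have push_forward := (measurePreserving_zero_tail (k + 1)).map_eq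
  calc ∫ v : Rd (k + 2), G (v 0, ‖WithLp.toLp 2 (Fin.tail v.ofLp)‖)
      = ∫ q : ℝ × Rd (k + 1), G (Prod.map id norm q) := by
        rw [← push_forward]
        exact (integral_map (f := G ∘ Prod.map id norm)
          (measurePreserving_zero_tail _).measurable.aemeasurable
          (hG.comp_measurable (by fun_prop)).aestronglyMeasurable).symm
    _ = ∫ q, G q ∂(volume : Measure (ℝ × Rd (k + 1))).map (Prod.map id norm) :=
        (integral_map (by fun_prop) hG.aestronglyMeasurable).symm
    _ = sphereArea (k + 1) • ∫ q in Set.univ ×ˢ Set.Ioi 0, (ENNReal.ofReal (q.2 ^ k)).toReal • G q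
        := by
        rw [law_eq, integral_smul_measure, integral_withDensity_eq_integral_toReal_smul
          (by fun_prop) (.of_forall fun _ => ENNReal.ofReal_lt_top)]
        rfl
    _ = _ := by
        congr 1
        refine setIntegral_congr_fun (MeasurableSet.univ.prod measurableSet_Ioi) fun q hq => ?_
        simp only [ENNReal.toReal_ofReal (pow_nonneg (le_of_lt hq.2) k)]

lemma integral_upperHalfPlane_eq_polar (G : ℝ × ℝ → F) :
    ∫ q in Set.univ ×ˢ Set.Ioi 0, G q =
      ∫ q in Set.Ioi 0 ×ˢ Set.Ioo 0 π, q.1 • G (q.1 * cos q.2, q.1 * sin q.2) := by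
  have upper_iff : ∀ q ∈ polarCoord.target,
      polarCoord.symm q ∈ Set.univ ×ˢ Set.Ioi 0 ↔ q ∈ Set.univ ×ˢ Set.Ioo 0 π := by
    rintro ⟨r, θ⟩ ⟨hr, hθ⟩
    simp only [polarCoord_symm_apply, Set.mem_prod, Set.mem_univ, true_and, Set.mem_Ioi,
      mul_pos_iff_of_pos_left (Set.mem_Ioi.1 hr), Set.mem_Ioo, hθ.2, and_true]
    refine ⟨fun hsin => ?_, fun hpos => sin_pos_of_pos_of_lt_pi hpos hθ.2⟩
    by_contra! hneg
    exact hsin.not_ge (sin_nonpos_of_nonpos_of_neg_pi_le hneg hθ.1.le)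
  have target_inter : polarCoord.target ∩ Set.univ ×ˢ Set.Ioo 0 π = Set.Ioi 0 ×ˢ Set.Ioo 0 π := by
    rw [polarCoord_target, Set.prod_inter_prod, Set.inter_univ, Set.Ioo_inter_Ioo]
    simp [pi_pos.le]
  rw [← integral_indicator (MeasurableSet.univ.prod measurableSet_Ioi),
    ← integral_comp_polarCoord_symm, ← target_inter,
    ← setIntegral_indicator (MeasurableSet.univ.prod measurableSet_Ioo)]
  refine setIntegral_congr_fun polarCoord.open_target.measurableSet fun q hq => ?_
  by_cases hq' : q ∈ Set.univ ×ˢ Set.Ioo 0 π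
  · rw [Set.indicator_of_mem ((upper_iff q hq).2 hq'), Set.indicator_of_mem hq',
      polarCoord_symm_apply]
  · rw [Set.indicator_of_notMem (mt (upper_iff q hq).1 hq'), Set.indicator_of_notMem hq',
      smul_zero]

lemma integral_zero_norm_eq_polar (k : ℕ) {H : ℝ × ℝ → F} (hH : StronglyMeasurable H) :
    ∫ v : Rd (k + 2), H (v 0, ‖v‖) = sphereArea (k + 1) •
      ∫ q in Set.Ioi 0 ×ˢ Set.Ioo 0 π, (q.1 ^ (k + 1) * sin q.2 ^ k) • H (q.1 * cos q.2, q.1) := by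
  have split_norm (v : Rd (k + 2)) :
      H (v 0, ‖v‖) = H (v 0, √(v 0 ^ 2 + ‖WithLp.toLp 2 (Fin.tail v.ofLp)‖ ^ 2)) := by
    rw [← norm_eq_sqrt_zero_tail]
  rw [integral_congr_ae (.of_forall split_norm),
    integral_zero_norm_tail k (G := fun q => H (q.1, √(q.1 ^ 2 + q.2 ^ 2)))
      (hH.comp_measurable (by fun_prop)), integral_upperHalfPlane_eq_polar]
  congr 1
  refine setIntegral_congr_fun (measurableSet_Ioi.prod measurableSet_Ioo) fun q hq => ?_
  have radius_eq : √((q.1 * cos q.2) ^ 2 + (q.1 * sin q.2) ^ 2) = q.1 := by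
    rw [sqrt_eq_iff_mul_self_eq_of_pos hq.1]
    linear_combination -q.1 ^ 2 * sin_sq_add_cos_sq q.2
  simp only [radius_eq, smul_smul]
  congr 1
  ring

end RadialIntegration

section PerturbedOscillator

lemma monotoneOn_mul_exp {E E' φ φ' : ℝ → ℝ} {s : Set ℝ} (hs : Convex ℝ s)
    (hE : ∀ z ∈ s, HasDerivAt E (E' z) z) (hφ : ∀ z ∈ s, HasDerivAt φ (φ' z) z)
    (hnonneg : ∀ z ∈ s, 0 ≤ E' z + φ' z * E z) :
    MonotoneOn (fun z => E z * exp (φ z)) s := by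
  have hderiv : ∀ z ∈ s,
      HasDerivAt (fun z => E z * exp (φ z)) ((E' z + φ' z * E z) * exp (φ z)) z := fun z hz =>
    ((hE z hz).mul (hφ z hz).exp).congr_deriv (by ring)
  refine monotoneOn_of_hasDerivWithinAt_nonneg hs
    (fun z hz => (hderiv z hz).continuousAt.continuousWithinAt)
    (fun z hz => (hderiv z (interior_subset hz)).hasDerivWithinAt)
    fun z hz => mul_nonneg (hnonneg z (interior_subset hz)) (exp_pos _).le

lemma exists_mem_Icc_le_abs {w w' : ℝ → ℝ} {e Z : ℝ} (he : 0 < e)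
    (hw : ∀ z ∈ Set.Icc Z (Z + 1), HasDerivAt w (w' z) z)
    (henergy : ∀ z ∈ Set.Icc Z (Z + 1), e ^ 2 ≤ w z ^ 2 + w' z ^ 2) :
    ∃ y ∈ Set.Icc Z (Z + 1), e / 4 ≤ |w y| := by
  by_contra! small
  obtain ⟨ξ, hξ, slope_eq⟩ := exists_hasDerivAt_eq_slope w w' (lt_add_one Z)
    (fun z hz => (hw z hz).continuousAt.continuousWithinAt)
    (fun z hz => hw z (Set.Ioo_subset_Icc_self hz))
  have hξ := Set.Ioo_subset_Icc_self hξ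
  have abs_slope_le : |w' ξ| ≤ e / 2 := by
    rw [slope_eq, add_sub_cancel_left, div_one]
    linarith [abs_sub (w (Z + 1)) (w Z), small Z (by simp), small (Z + 1) (by simp)]
  have := sq_le_sq.2 ((abs_abs (w' ξ)).trans_le (abs_slope_le.trans (le_abs_self _)))
  have := sq_le_sq.2 ((abs_abs (w ξ)).trans_le ((small ξ hξ).le.trans (le_abs_self _)))
  nlinarith [henergy ξ hξ, sq_abs (w ξ), sq_abs (w' ξ)]

/-- `w` solves `w'' = (κ / z² - 1) w` on the half-line `z > 0`, with derivative `w'`; this is the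
normal form of Bessel's equation. -/
structure IsPerturbedOscillator (κ : ℝ) (w w' : ℝ → ℝ) : Prop where
  hasDerivAt : ∀ z, 0 < z → HasDerivAt w (w' z) z
  hasDerivAt_deriv : ∀ z, 0 < z → HasDerivAt w' ((κ / z ^ 2 - 1) * w z) z

namespace IsPerturbedOscillator

variable {w w' : ℝ → ℝ} {κ : ℝ}

lemma hasDerivAt_energy (h : IsPerturbedOscillator κ w w') {z : ℝ} (hz : 0 < z) :
    HasDerivAt (fun z => w z ^ 2 + w' z ^ 2) (2 * κ * (w z * w' z) / z ^ 2) z := by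
  refine (((h.hasDerivAt z hz).pow 2).add ((h.hasDerivAt_deriv z hz).pow 2)).congr_deriv ?_
  push_cast
  ring

lemma energy_bounds (h : IsPerturbedOscillator κ w w') {z : ℝ} (hz : 1 ≤ z) :
    exp (-|κ|) * (w 1 ^ 2 + w' 1 ^ 2) ≤ w z ^ 2 + w' z ^ 2 ∧
      w z ^ 2 + w' z ^ 2 ≤ exp |κ| * (w 1 ^ 2 + w' 1 ^ 2) := by
  set E := fun z => w z ^ 2 + w' z ^ 2
  have E_nonneg (z : ℝ) : 0 ≤ E z := by positivity
  have hE : ∀ z ∈ Set.Ici (1 : ℝ), HasDerivAt E (2 * κ * (w z * w' z) / z ^ 2) z :=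
    fun z hz => h.hasDerivAt_energy (one_pos.trans_le hz)
  have hφ (c : ℝ) : ∀ z ∈ Set.Ici (1 : ℝ), HasDerivAt (fun z => c / z) (-(c / z ^ 2)) z :=
    fun z hz => ((hasDerivAt_inv (one_pos.trans_le hz).ne').const_mul c).congr_deriv (by ring)
  have abs_deriv_le (z : ℝ) : |2 * κ * (w z * w' z) / z ^ 2| ≤ |κ| / z ^ 2 * E z := by
    have amgm : 2 * (|w z| * |w' z|) ≤ E z := by
      nlinarith [sq_nonneg (|w z| - |w' z|), sq_abs (w z), sq_abs (w' z)]
    calc |2 * κ * (w z * w' z) / z ^ 2| = |κ| / z ^ 2 * (2 * (|w z| * |w' z|)) := by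
          simp only [abs_div, abs_mul, abs_two, abs_pow, sq_abs]
          ring
      _ ≤ _ := by gcongr
  have lower := monotoneOn_mul_exp (convex_Ici 1) hE (hφ (-|κ|))
    (fun z _ => by
      rw [neg_div, neg_neg]
      linarith [neg_le_of_abs_le (abs_deriv_le z)])
    Set.self_mem_Ici hz hz
  have upper := monotoneOn_mul_exp (convex_Ici 1) (fun z hz => (hE z hz).neg) (hφ |κ|)
    (fun z _ => by simpa using le_of_abs_le (abs_deriv_le z)) Set.self_mem_Ici hz hz
  have one_le_exp : 1 ≤ exp (|κ| / z) := one_le_exp (by positivity)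
  have exp_le_one : exp (-|κ| / z) ≤ 1 := by
    rw [neg_div, exp_neg]
    exact inv_le_one_of_one_le₀ one_le_exp
  simp only [div_one, Pi.neg_apply] at lower upper
  constructor <;> nlinarith [E_nonneg z]

lemma exists_le_abs (h : IsPerturbedOscillator κ w w') (h1 : w 1 ≠ 0) :
    ∃ b η : ℝ, 0 < b ∧ 0 < η ∧ η ≤ 1 ∧
      ∀ Z, 2 ≤ Z → ∃ y ∈ Set.Icc Z (Z + 1), ∀ z, |z - y| ≤ η → b ≤ |w z| := by
  obtain ⟨e₀, he₀, energy_ge⟩ : ∃ e, 0 < e ∧ ∀ z, 1 ≤ z → e ^ 2 ≤ w z ^ 2 + w' z ^ 2 :=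
    ⟨√(exp (-|κ|) * (w 1 ^ 2 + w' 1 ^ 2)), by positivity, fun z hz => by
      rw [sq_sqrt (by positivity)]
      exact (h.energy_bounds hz).1⟩
  obtain ⟨e₁, he₁, abs_deriv_le⟩ : ∃ e, 0 < e ∧ ∀ z ∈ Set.Ici (1 : ℝ), ‖w' z‖ ≤ e :=
    ⟨√(exp |κ| * (w 1 ^ 2 + w' 1 ^ 2)), by positivity, fun z hz =>
      abs_le_sqrt (by nlinarith [(h.energy_bounds hz).2, sq_nonneg (w z)])⟩
  refine ⟨e₀ / 8, min 1 (e₀ / (8 * e₁)), by positivity, by positivity, min_le_left _ _,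
    fun Z hZ => ?_⟩
  obtain ⟨y, hy, hwy⟩ := exists_mem_Icc_le_abs he₀
    (fun z hz => h.hasDerivAt z (by linarith [hz.1])) (fun z hz => energy_ge z (by linarith [hz.1]))
  refine ⟨y, hy, fun z hz => ?_⟩
  have hz1 : 1 ≤ z := by linarith [hy.1, neg_le_of_abs_le (hz.trans (min_le_left _ _))]
  have lipschitz : |w z - w y| ≤ e₁ * |z - y| :=
    (convex_Ici 1).norm_image_sub_le_of_norm_hasDerivWithin_le
      (fun x hx => (h.hasDerivAt x (one_pos.trans_le hx)).hasDerivWithinAt) abs_deriv_le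
      (Set.mem_Ici.2 (by linarith [hy.1])) hz1
  have oscillation_le : e₁ * |z - y| ≤ e₀ / 8 := by
    calc e₁ * |z - y| ≤ e₁ * (e₀ / (8 * e₁)) := by
          gcongr
          exact hz.trans (min_le_right _ _)
      _ = e₀ / 8 := by field_simp
  linarith [abs_sub_abs_le_abs_sub (w y) (w z), abs_sub_comm (w y) (w z)]

end IsPerturbedOscillator

end PerturbedOscillator

section BesselIntegral

lemma hasDerivAt_integral_comp_mul {f f' g h : ℝ → ℝ} {a b M : ℝ}
    (hf : ∀ x, HasDerivAt f (f' x) x) (hf' : Continuous f') (hM : ∀ x, |f' x| ≤ M)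
    (hg : Continuous g) (hh : Continuous h) (z : ℝ) :
    HasDerivAt (fun z => ∫ θ in a..b, f (z * g θ) * h θ)
      (∫ θ in a..b, f' (z * g θ) * (g θ * h θ)) z := by
  have f_continuous : Continuous f := continuous_iff_continuousAt.2 fun x => (hf x).continuousAt
  refine (intervalIntegral.hasDerivAt_integral_of_dominated_loc_of_deriv_le
    (F' := fun z θ => f' (z * g θ) * (g θ * h θ)) (bound := fun θ => M * |g θ * h θ|) univ_mem
    (.of_forall fun z => Continuous.aestronglyMeasurable (by fun_prop))
    (Continuous.intervalIntegrable (by fun_prop) _ _)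
    (Continuous.aestronglyMeasurable (by fun_prop)) (.of_forall fun θ _ z _ => ?_)
    (Continuous.intervalIntegrable (by fun_prop) _ _) (.of_forall fun θ _ z _ => ?_)).2
  · rw [norm_mul]
    exact mul_le_mul_of_nonneg_right (hM _) (abs_nonneg _)
  · refine (((hf _).comp z ((hasDerivAt_id z).mul_const (g θ))).mul_const (h θ)).congr_deriv ?_
    simp only [id, one_mul, mul_assoc]

/-- Poisson's integral `∫₀^π cos (z cos θ) sinᵏ θ dθ`, a constant multiple of
`z ^ (-k/2) * J_{k/2}(z)`. -/
def besselIntegral (k : ℕ) (z : ℝ) : ℝ := ∫ θ in 0..π, cos (z * cos θ) * sin θ ^ k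

lemma hasDerivAt_besselIntegral (k : ℕ) (z : ℝ) :
    HasDerivAt (besselIntegral k) (∫ θ in 0..π, -sin (z * cos θ) * (cos θ * sin θ ^ k)) z :=
  hasDerivAt_integral_comp_mul hasDerivAt_cos (by fun_prop)
    (fun x => (abs_neg _).trans_le (abs_sin_le_one x)) continuous_cos (by fun_prop) z

lemma hasDerivAt_deriv_besselIntegral (k : ℕ) (z : ℝ) :
    HasDerivAt (deriv (besselIntegral k))
      (∫ θ in 0..π, -cos (z * cos θ) * (cos θ * (cos θ * sin θ ^ k))) z := by
  rw [funext fun z => (hasDerivAt_besselIntegral k z).deriv]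
  exact hasDerivAt_integral_comp_mul (fun x => (hasDerivAt_sin x).neg) (by fun_prop)
    (fun x => (abs_neg _).trans_le (abs_cos_le_one x)) continuous_cos (by fun_prop) z

lemma continuous_besselIntegral (k : ℕ) : Continuous (besselIntegral k) :=
  continuous_iff_continuousAt.2 fun z => (hasDerivAt_besselIntegral k z).continuousAt

-- The left-hand side integrates the exact derivative of `-sin (z cos θ) sinᵏ⁺¹ θ`.
lemma besselIntegral_ode (k : ℕ) (z : ℝ) :
    z * deriv (deriv (besselIntegral k)) z + (k + 1) * deriv (besselIntegral k) z +
      z * besselIntegral k z = 0 := by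
  rw [(hasDerivAt_deriv_besselIntegral k z).deriv, (hasDerivAt_besselIntegral k z).deriv,
    besselIntegral]
  have integrable {f : ℝ → ℝ} (hf : Continuous f) : IntervalIntegrable f volume 0 π :=
    hf.intervalIntegrable _ _
  simp only [← intervalIntegral.integral_const_mul]
  rw [← intervalIntegral.integral_add (integrable (by fun_prop)) (integrable (by fun_prop)),
    ← intervalIntegral.integral_add (integrable (by fun_prop)) (integrable (by fun_prop)),
    intervalIntegral.integral_eq_sub_of_hasDerivAt
      (f := fun θ => -(sin (z * cos θ) * sin θ ^ (k + 1))) (fun θ _ => ?_)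
      (integrable (by fun_prop))]
  · simp
  · refine ((((hasDerivAt_cos θ).const_mul z).sin.mul
      ((hasDerivAt_sin θ).pow (k + 1))).neg).congr_deriv ?_
    simp only [Pi.pow_apply, Nat.add_sub_cancel]
    push_cast
    linear_combination z * cos (z * cos θ) * sin θ ^ k * sin_sq_add_cos_sq θ

lemma besselIntegral_one_pos (k : ℕ) : 0 < besselIntegral k 1 := by
  refine intervalIntegral.intervalIntegral_pos_of_pos_on
    (Continuous.intervalIntegrable (by fun_prop) _ _) (fun θ hθ => ?_) pi_pos
  have cos_cos_pos : 0 < cos (1 * cos θ) := by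
    refine cos_pos_of_mem_Ioo ⟨?_, ?_⟩ <;>
      linarith [neg_one_le_cos θ, cos_le_one θ, pi_gt_three]
  exact mul_pos cos_cos_pos (pow_pos (sin_pos_of_mem_Ioo hθ) k)

lemma isPerturbedOscillator_rpow_mul_besselIntegral (k : ℕ) {μ : ℝ} (hμ : (k + 1 : ℝ) = 2 * μ) :
    IsPerturbedOscillator (μ ^ 2 - μ) (fun z => z ^ μ * besselIntegral k z)
      fun z => z ^ μ * (deriv (besselIntegral k) z + μ / z * besselIntegral k z) := by
  have hB (z : ℝ) := (hasDerivAt_besselIntegral k z).differentiableAt.hasDerivAt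
  have hB' (z : ℝ) := (hasDerivAt_deriv_besselIntegral k z).differentiableAt.hasDerivAt
  have hrpow (z : ℝ) (hz : 0 < z) : HasDerivAt (fun z => z ^ μ) (z ^ μ * (μ / z)) z :=
    (hasDerivAt_rpow_const (.inl hz.ne')).congr_deriv (by rw [rpow_sub_one hz.ne']; ring)
  refine ⟨fun z hz => ((hrpow z hz).mul (hB z)).congr_deriv (by ring), fun z hz => ?_⟩
  have hinv : HasDerivAt (fun z => μ / z) (-μ / z ^ 2) z :=
    ((hasDerivAt_inv hz.ne').const_mul μ).congr_deriv (by ring)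
  refine ((hrpow z hz).mul ((hB' z).add (hinv.mul (hB z)))).congr_deriv ?_
  have ode := besselIntegral_ode k z
  rw [hμ] at ode
  simp only [Pi.add_apply, Pi.mul_apply]
  field_simp
  linear_combination z * ode

lemma exists_le_abs_besselIntegral (k : ℕ) :
    ∃ b η : ℝ, 0 < b ∧ 0 < η ∧ η ≤ 1 ∧ ∀ Z, 2 ≤ Z → ∃ y ∈ Set.Icc Z (Z + 1),
      ∀ z, |z - y| ≤ η → b * z ^ (-((k + 1) / 2 : ℝ)) ≤ |besselIntegral k z| := by
  obtain ⟨b, η, hb, hη, hη1, large⟩ :=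
    (isPerturbedOscillator_rpow_mul_besselIntegral k (μ := (k + 1) / 2) (by ring)).exists_le_abs
      (by simpa using (besselIntegral_one_pos k).ne')
  refine ⟨b, η, hb, hη, hη1, fun Z hZ => ?_⟩
  obtain ⟨y, hy, hlarge⟩ := large Z hZ
  refine ⟨y, hy, fun z hz => ?_⟩
  have hz0 : 0 < z := by linarith [hy.1, neg_le_of_abs_le hz]
  have hbz := hlarge z hz
  rw [abs_mul, abs_of_pos (rpow_pos_of_pos hz0 _)] at hbz
  rwa [rpow_neg hz0.le, ← div_eq_mul_inv, div_le_iff₀' (rpow_pos_of_pos hz0 _)]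

lemma exists_shell_le_abs_besselIntegral (k : ℕ) :
    ∃ b h : ℝ, 0 < b ∧ 0 < h ∧ h ≤ 1 / 4 ∧ ∀ i : ℕ, 1 ≤ i →
      ∃ ρ ∈ Set.Icc (2 * i : ℝ) (2 * i + 1), ∀ y r : ℝ, |y - ρ| ≤ h → |r - 1| * i ≤ h →
        b * (i : ℝ) ^ (-((k + 1) / 2 : ℝ)) ≤ |besselIntegral k (2 * π * y * r)| := by
  obtain ⟨b, η, hb, hη, hη1, large⟩ := exists_le_abs_besselIntegral k
  have hπ : 3 < π := pi_gt_three
  obtain ⟨h, hh, rfl⟩ : ∃ h, 0 < h ∧ 10 * π * h = η :=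
    ⟨η / (10 * π), by positivity, by field_simp⟩
  have hh4 : h ≤ 1 / 4 := by nlinarith
  refine ⟨b * 20 ^ (-((k + 1) / 2 : ℝ)), h, by positivity, hh, hh4, fun i hi => ?_⟩
  have hi1 : (1 : ℝ) ≤ i := mod_cast hi
  obtain ⟨z₀, hz₀, hlarge⟩ := large (2 * π * (2 * i)) (by nlinarith)
  obtain ⟨ρ, rfl⟩ : ∃ ρ, 2 * π * ρ = z₀ := ⟨z₀ / (2 * π), by field_simp⟩
  have hρ : ρ ∈ Set.Icc (2 * i : ℝ) (2 * i + 1) := ⟨by nlinarith [hz₀.1], by nlinarith [hz₀.2]⟩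
  refine ⟨ρ, hρ, fun y r hy hr => ?_⟩
  have hy4 : |y| ≤ 4 * i := by
    rw [abs_le]
    constructor <;> linarith [abs_le.1 hy, hρ.1, hρ.2]
  have near : |2 * π * y * r - 2 * π * ρ| ≤ 10 * π * h := by
    calc |2 * π * y * r - 2 * π * ρ| = 2 * π * |y * (r - 1) + (y - ρ)| := by
          rw [← abs_of_pos two_pi_pos, ← abs_mul, abs_of_pos two_pi_pos]
          ring_nf
      _ ≤ 2 * π * (|y| * |r - 1| + |y - ρ|) := by
          rw [← abs_mul]
          gcongr
          exact abs_add_le _ _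
      _ ≤ 2 * π * (4 * i * |r - 1| + h) := by gcongr
      _ ≤ 10 * π * h := by nlinarith
  have arg_mem : 0 < 2 * π * y * r ∧ 2 * π * y * r ≤ 20 * i := by
    constructor <;> nlinarith [abs_le.1 near, hz₀.1, hz₀.2, pi_lt_d2]
  refine le_trans ?_ (hlarge _ near)
  rw [mul_assoc, ← mul_rpow (by norm_num) (by positivity)]
  gcongr b * ?_
  exact rpow_le_rpow_of_nonpos arg_mem.1 arg_mem.2 (neg_nonpos.2 (by positivity))

end BesselIntegral

section RadialFourier

lemma integral_inner_norm_eq_integral_zero_norm {n : ℕ} {F : Type*} [NormedAddCommGroup F]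
    [NormedSpace ℝ F] (H : ℝ × ℝ → F) (x : Rd (n + 1)) :
    ∫ v : Rd (n + 1), H (⟪v, x⟫, ‖v‖) = ∫ v : Rd (n + 1), H (‖x‖ * v 0, ‖v‖) := by
  set y : Rd (n + 1) := EuclideanSpace.single 0 ‖x‖
  let A := (ℝ ∙ (y - x))ᗮ.reflection
  have hA : A y = x := Submodule.reflection_sub (by simp [y])
  rw [← A.measurePreserving.integral_comp A.toHomeomorph.measurableEmbedding]
  refine integral_congr_ae (.of_forall fun v => ?_)
  have inner_eq : ⟪A v, x⟫ = ‖x‖ * v 0 := by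
    rw [← hA, A.inner_map_map, hA]
    simp [y, EuclideanSpace.inner_single_right]
  simp only [inner_eq, A.norm_map]

lemma re_fourierInv_ofReal {V : Type*} [NormedAddCommGroup V] [InnerProductSpace ℝ V]
    [FiniteDimensional ℝ V] [MeasurableSpace V] [BorelSpace V] {f : V → ℝ} (hf : Integrable f)
    (x : V) : (𝓕⁻ (fun v => (f v : ℂ)) x).re = ∫ v, cos (2 * π * ⟪v, x⟫) * f v := by
  have integrable : Integrable fun v => Complex.exp (↑(2 * π * ⟪v, x⟫) * Complex.I) • (f v : ℂ) :=
    hf.ofReal.bdd_mul (c := 1) (Continuous.aestronglyMeasurable (by fun_prop))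
      (.of_forall fun v => (Complex.norm_exp_ofReal_mul_I _).le)
  rw [fourierInv_eq', ← RCLike.re_to_complex, ← integral_re integrable]
  simp only [smul_eq_mul, RCLike.re_to_complex, Complex.re_mul_ofReal,
    Complex.exp_ofReal_mul_I_re]

lemma integrableOn_poisson_kernel_mul (k : ℕ) (ρ : ℝ) {f : ℝ → ℝ}
    (hf : IntegrableOn (fun r => r ^ (k + 1) * f r) (Set.Ioi 0)) :
    IntegrableOn (fun q : ℝ × ℝ => q.1 ^ (k + 1) * f q.1 *
      (cos (ρ * q.1 * cos q.2) * sin q.2 ^ k)) (Set.Ioi 0 ×ˢ Set.Ioo 0 π) := by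
  have integrable_dom := hf.integrable.mul_prod
    (integrable_const (μ := volume.restrict (Set.Ioo 0 π)) (1 : ℝ))
  rw [Measure.prod_restrict] at integrable_dom
  simp only [mul_one] at integrable_dom
  refine integrable_dom.mul_bdd (c := 1) (Continuous.aestronglyMeasurable (by fun_prop))
    (.of_forall fun q => ?_)
  rw [norm_mul, norm_pow]
  exact mul_le_one₀ (abs_cos_le_one _) (by positivity)
    (pow_le_one₀ (abs_nonneg _) (abs_sin_le_one _))

lemma re_fourierInv_radial (k : ℕ) {f : ℝ → ℝ} (hf : Measurable f)
    (hf_int : IntegrableOn (fun r => r ^ (k + 1) * f r) (Set.Ioi 0)) (x : Rd (k + 2)) :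
    (𝓕⁻ (fun ξ : Rd (k + 2) => (f ‖ξ‖ : ℂ)) x).re = sphereArea (k + 1) *
      ∫ r in Set.Ioi 0, r ^ (k + 1) * f r * besselIntegral k (2 * π * ‖x‖ * r) := by
  have polar_integrand (q : ℝ × ℝ) : (q.1 ^ (k + 1) * sin q.2 ^ k) •
      (cos (2 * π * (‖x‖ * (q.1 * cos q.2))) * f q.1) = q.1 ^ (k + 1) * f q.1 *
        (cos (2 * π * ‖x‖ * q.1 * cos q.2) * sin q.2 ^ k) := by
    rw [smul_eq_mul, show 2 * π * (‖x‖ * (q.1 * cos q.2)) = 2 * π * ‖x‖ * q.1 * cos q.2 by ring]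
    ring
  rw [re_fourierInv_ofReal ((integrable_radial_iff (k + 1)).2 hf_int),
    integral_inner_norm_eq_integral_zero_norm (fun q => cos (2 * π * q.1) * f q.2),
    integral_zero_norm_eq_polar k (H := fun q => cos (2 * π * (‖x‖ * q.1)) * f q.2)
      (Measurable.stronglyMeasurable (by fun_prop)), smul_eq_mul]
  simp only [polar_integrand]
  rw [Measure.volume_eq_prod, setIntegral_prod _ (integrableOn_poisson_kernel_mul k _ hf_int)]
  simp only [integral_const_mul, besselIntegral, intervalIntegral.integral_of_le pi_pos.le,
    integral_Ioc_eq_integral_Ioo]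

end RadialFourier

section ShellProfile

/-- The profile `r ↦ 1_{|r - 1| ≤ m} φ(|r - 1|)` of a radial function that lives on the shell of
half-width `m` around the unit sphere. -/
def shellProfile (m : ℝ) (φ : ℝ → ℝ) (r : ℝ) : ℝ := (Set.Iic m).indicator φ |r - 1|

variable {m : ℝ} {φ : ℝ → ℝ}

lemma shellProfile_of_le {r : ℝ} (hr : |r - 1| ≤ m) : shellProfile m φ r = φ |r - 1| :=
  Set.indicator_of_mem (Set.mem_Iic.2 hr) φ

lemma shellProfile_of_lt {r : ℝ} (hr : m < |r - 1|) : shellProfile m φ r = 0 :=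
  Set.indicator_of_notMem (Set.notMem_Iic.2 hr) φ

lemma shellProfile_nonneg (hφ : ∀ t, 0 ≤ φ t) (r : ℝ) : 0 ≤ shellProfile m φ r :=
  Set.indicator_nonneg (fun t _ => hφ t) _

lemma measurable_shellProfile (hφ : Measurable φ) : Measurable (shellProfile m φ) :=
  (hφ.indicator measurableSet_Iic).comp (by fun_prop)

lemma integrable_shellProfile (hφ : IntegrableOn φ (Set.Ioo 0 m)) :
    Integrable (shellProfile m φ) := by
  refine Integrable.comp_sub_right (f := fun u => (Set.Iic m).indicator φ |u|) ?_ 1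
  refine (integrable_fun_norm_addHaar (E := ℝ) volume).2 ?_
  simpa [integrableOn_indicator_iff measurableSet_Iic, Set.Iic_inter_Ioi,
    integrableOn_Ioc_iff_integrableOn_Ioo] using hφ

lemma integral_shellProfile (m : ℝ) (φ : ℝ → ℝ) :
    ∫ r, shellProfile m φ r = 2 * ∫ t in Set.Ioo 0 m, φ t := by
  simp only [shellProfile]
  rw [integral_sub_right_eq_self (fun u => (Set.Iic m).indicator φ |u|), integral_comp_abs,
    setIntegral_indicator measurableSet_Iic, Set.Ioi_inter_Iic, integral_Ioc_eq_integral_Ioo]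

lemma setIntegral_Ioi_shellProfile_mul (hm : m < 1) (φ h : ℝ → ℝ) :
    ∫ r in Set.Ioi 0, shellProfile m φ r * h r = ∫ r, shellProfile m φ r * h r := by
  refine setIntegral_eq_integral_of_forall_compl_eq_zero fun r hr => ?_
  have far : m < |r - 1| := hm.trans_le <| by
    rw [abs_sub_comm]
    exact le_abs.2 (.inl (by linarith [Set.notMem_Ioi.1 hr]))
  rw [shellProfile_of_lt far, zero_mul]

lemma integrable_shellProfile_mul (hφ : IntegrableOn φ (Set.Ioo 0 m)) {h : ℝ → ℝ}
    (hh : Continuous h) : Integrable fun r => shellProfile m φ r * h r := by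
  have support_subset : Function.support (fun r => shellProfile m φ r * h r) ⊆
      Metric.closedBall 1 m := fun r hr => by
    by_contra far
    rw [Metric.mem_closedBall, Real.dist_eq, not_le] at far
    exact hr (by simp only [shellProfile_of_lt far, zero_mul])
  rw [← integrableOn_iff_integrable_of_support_subset support_subset]
  exact (integrable_shellProfile hφ).integrableOn.mul_continuousOn hh.continuousOn
    (isCompact_closedBall 1 m)

lemma le_or_le_neg_of_le_abs {X : Type*} [TopologicalSpace X] {s : Set X} (hs : IsPreconnected s)
    {h : X → ℝ} (hh : ContinuousOn h s) {l : ℝ} (hl : 0 < l) (habs : ∀ x ∈ s, l ≤ |h x|) :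
    (∀ x ∈ s, l ≤ h x) ∨ ∀ x ∈ s, l ≤ -h x := by
  have h_ne : ∀ x ∈ s, h x ≠ 0 := fun x hx => abs_pos.1 (hl.trans_le (habs x hx))
  rcases hs.mapsTo_Ioi_or_Iio hh h_ne with pos | neg
  · exact .inl fun x hx => (habs x hx).trans_eq (abs_of_pos (pos hx))
  · exact .inr fun x hx => (habs x hx).trans_eq (abs_of_neg (neg hx))

lemma le_integral_shellProfile_mul (hφ : IntegrableOn φ (Set.Ioo 0 m)) (hφ_nonneg : ∀ t, 0 ≤ φ t)
    {h : ℝ → ℝ} (hh : Continuous h) {l : ℝ} (hl : ∀ r ∈ Metric.closedBall 1 m, l ≤ h r) :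
    l * (2 * ∫ t in Set.Ioo 0 m, φ t) ≤ ∫ r, shellProfile m φ r * h r := by
  rw [← integral_shellProfile, ← integral_const_mul]
  refine integral_mono ((integrable_shellProfile hφ).const_mul l)
    (integrable_shellProfile_mul hφ hh) fun r => ?_
  rcases le_or_gt |r - 1| m with near | far
  · rw [mul_comm l]
    exact mul_le_mul_of_nonneg_left (hl r near) (shellProfile_nonneg hφ_nonneg r)
  · simp only [shellProfile_of_lt far, mul_zero, zero_mul, le_refl]

lemma le_abs_integral_shellProfile_mul (hφ : IntegrableOn φ (Set.Ioo 0 m))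
    (hφ_nonneg : ∀ t, 0 ≤ φ t) {h : ℝ → ℝ} (hh : Continuous h) {l : ℝ} (hl : 0 < l)
    (habs : ∀ r ∈ Metric.closedBall 1 m, l ≤ |h r|) :
    l * (2 * ∫ t in Set.Ioo 0 m, φ t) ≤ |∫ r, shellProfile m φ r * h r| := by
  have connected : IsPreconnected (Metric.closedBall (1 : ℝ) m) :=
    (convex_closedBall 1 m).isPreconnected
  rcases le_or_le_neg_of_le_abs connected hh.continuousOn hl habs with pos | neg
  · exact (le_integral_shellProfile_mul hφ hφ_nonneg hh pos).trans (le_abs_self _)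
  · have lower := le_integral_shellProfile_mul (h := fun r => -h r) hφ hφ_nonneg hh.neg neg
    simp only [mul_neg, integral_neg] at lower
    exact lower.trans (neg_le_abs _)

lemma radialFT_eq_shellProfile (d : ℕ) (m : ℝ) (a : ℝ → ℝ) :
    radialFT d m a = fun ξ => (shellProfile m a ‖ξ‖ : ℂ) := by
  funext ξ
  simp only [radialFT, shellProfile, Set.indicator_apply, Set.mem_Iic]
  split_ifs <;> simp

lemma le_norm_fourierInv_radialFT (k : ℕ) (hm : m ≤ 1 / 2) {a : ℝ → ℝ} (ha : Measurable a)
    (ha_nonneg : ∀ t, 0 ≤ a t) (ha_int : IntegrableOn a (Set.Ioo 0 m)) {x : Rd (k + 2)} {l : ℝ}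
    (hl : 0 < l) (hbessel : ∀ r, |r - 1| ≤ m → l ≤ |besselIntegral k (2 * π * ‖x‖ * r)|) :
    sphereArea (k + 1) * ((1 / 2) ^ (k + 1) * l * (2 * ∫ t in Set.Ioo 0 m, a t)) ≤
      ‖𝓕⁻ (radialFT (k + 2) m a) x‖ := by
  set h : ℝ → ℝ := fun r => r ^ (k + 1) * besselIntegral k (2 * π * ‖x‖ * r)
  have h_continuous : Continuous h := by
    have := continuous_besselIntegral k
    fun_prop
  have le_abs_h : ∀ r ∈ Metric.closedBall 1 m, (1 / 2) ^ (k + 1) * l ≤ |h r| := fun r hr => by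
    rw [Metric.mem_closedBall, Real.dist_eq] at hr
    have half_le : 1 / 2 ≤ |r| := le_abs.2 (.inl (by linarith [neg_le_of_abs_le hr]))
    rw [abs_mul, abs_pow]
    gcongr
    exact hbessel r hr
  have profile_int : IntegrableOn (fun r => r ^ (k + 1) * shellProfile m a r) (Set.Ioi 0) := by
    simpa only [mul_comm] using
      (integrable_shellProfile_mul ha_int (continuous_pow (k + 1))).integrableOn
  refine le_trans ?_ (Complex.abs_re_le_norm _)
  rw [radialFT_eq_shellProfile,
    re_fourierInv_radial k (measurable_shellProfile ha) profile_int, abs_mul,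
    abs_of_pos (sphereArea_pos k)]
  refine mul_le_mul_of_nonneg_left ?_ (sphereArea_pos k).le
  refine (le_abs_integral_shellProfile_mul ha_int ha_nonneg h_continuous (by positivity)
    le_abs_h).trans_eq ?_
  rw [← setIntegral_Ioi_shellProfile_mul (by linarith)]
  congr 1
  refine integral_congr_ae (.of_forall fun r => ?_)
  simp only [h]
  ring

lemma integrableOn_mul_add_rpow {γ : ℝ} (hγ : 0 ≤ γ) (hm : m ≤ 1) (ε : ℝ)
    (hφ : IntegrableOn φ (Set.Ioo 0 m)) :
    IntegrableOn (fun t => φ t * (ε + t ^ γ)) (Set.Ioo 0 m) := by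
  have measurable_weight : Measurable fun t : ℝ => ε + t ^ γ := by fun_prop
  refine hφ.mul_bdd (c := |ε| + 1) measurable_weight.aestronglyMeasurable ?_
  filter_upwards [ae_restrict_mem measurableSet_Ioo] with t ht
  have rpow_le : |t ^ γ| ≤ 1 := by
    rw [abs_of_nonneg (rpow_nonneg ht.1.le γ)]
    exact rpow_le_one ht.1.le (ht.2.le.trans hm) hγ
  exact (abs_add_le _ _).trans (by gcongr)

lemma shellProfile_mul_pow_mul_bounds (n : ℕ) (hm : m ≤ 1 / 2) (hφ_nonneg : ∀ t, 0 ≤ φ t)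
    {w g : ℝ → ℝ} {c C : ℝ} (hg_nonneg : ∀ r, 0 ≤ g r)
    (hg : ∀ r, |r - 1| ≤ m → c * w |r - 1| ≤ g r ∧ g r ≤ C * w |r - 1|) (r : ℝ) :
    (1 / 2) ^ n * c * shellProfile m (fun t => φ t * w t) r ≤
        shellProfile m φ r * (r ^ n * g r) ∧
      shellProfile m φ r * (r ^ n * g r) ≤
        (3 / 2) ^ n * C * shellProfile m (fun t => φ t * w t) r := by
  rcases le_or_gt |r - 1| m with near | far
  · obtain ⟨lower, upper⟩ := hg r near
    have half_le : 1 / 2 ≤ r := by linarith [neg_le_of_abs_le near]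
    have le_three_halves : r ≤ 3 / 2 := by linarith [le_of_abs_le near]
    have hφr := hφ_nonneg |r - 1|
    have hgr := hg_nonneg r
    rw [shellProfile_of_le near, shellProfile_of_le near]
    constructor
    · calc (1 / 2) ^ n * c * (φ |r - 1| * w |r - 1|)
          = φ |r - 1| * ((1 / 2) ^ n * (c * w |r - 1|)) := by ring
        _ ≤ φ |r - 1| * ((1 / 2) ^ n * g r) := by gcongr
        _ ≤ φ |r - 1| * (r ^ n * g r) := by gcongr
    · calc φ |r - 1| * (r ^ n * g r)
          ≤ φ |r - 1| * ((3 / 2) ^ n * g r) := by gcongr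
        _ ≤ φ |r - 1| * ((3 / 2) ^ n * (C * w |r - 1|)) := by gcongr
        _ = (3 / 2) ^ n * C * (φ |r - 1| * w |r - 1|) := by ring
  · simp only [shellProfile_of_lt far, mul_zero, zero_mul, le_refl, and_self]

lemma integral_shellProfile_norm_mul_bounds (n : ℕ) (hm : m ≤ 1 / 2) (hφ : Measurable φ)
    (hφ_nonneg : ∀ t, 0 ≤ φ t) {w g : ℝ → ℝ} {c C : ℝ} (hg_meas : Measurable g)
    (hg_nonneg : ∀ r, 0 ≤ g r)
    (hg : ∀ r, |r - 1| ≤ m → c * w |r - 1| ≤ g r ∧ g r ≤ C * w |r - 1|)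
    (hφw : IntegrableOn (fun t => φ t * w t) (Set.Ioo 0 m)) :
    sphereArea (n + 1) * ((1 / 2) ^ n * c * (2 * ∫ t in Set.Ioo 0 m, φ t * w t)) ≤
        ∫ ξ : Rd (n + 1), shellProfile m φ ‖ξ‖ * g ‖ξ‖ ∧
      ∫ ξ : Rd (n + 1), shellProfile m φ ‖ξ‖ * g ‖ξ‖ ≤
        sphereArea (n + 1) * ((3 / 2) ^ n * C * (2 * ∫ t in Set.Ioo 0 m, φ t * w t)) := by
  have bounds := shellProfile_mul_pow_mul_bounds n hm hφ_nonneg hg_nonneg hg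
  have weighted_int := integrable_shellProfile hφw
  have radial_meas : Measurable fun r => shellProfile m φ r * (r ^ n * g r) :=
    (measurable_shellProfile hφ).mul ((measurable_id.pow_const n).mul hg_meas)
  have radial_int : Integrable fun r => shellProfile m φ r * (r ^ n * g r) :=
    integrable_of_le_of_le radial_meas.aestronglyMeasurable
      (.of_forall fun r => (bounds r).1) (.of_forall fun r => (bounds r).2)
      (weighted_int.const_mul _) (weighted_int.const_mul _)
  have polar : ∫ ξ : Rd (n + 1), shellProfile m φ ‖ξ‖ * g ‖ξ‖ =
      sphereArea (n + 1) * ∫ r, shellProfile m φ r * (r ^ n * g r) := by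
    rw [integral_radial_eq n fun r => shellProfile m φ r * g r,
      ← setIntegral_Ioi_shellProfile_mul (by linarith), smul_eq_mul]
    simp only [smul_eq_mul, mul_left_comm]
  rw [polar, ← integral_shellProfile, ← integral_const_mul ((1 / 2) ^ n * c),
    ← integral_const_mul ((3 / 2) ^ n * C)]
  have area_nonneg := (sphereArea_pos n).le
  exact ⟨mul_le_mul_of_nonneg_left (integral_mono (weighted_int.const_mul _) radial_int
      fun r => (bounds r).1) area_nonneg,
    mul_le_mul_of_nonneg_left (integral_mono radial_int (weighted_int.const_mul _)
      fun r => (bounds r).2) area_nonneg⟩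

lemma norm_radialFT_sq (d : ℕ) (m : ℝ) (a : ℝ → ℝ) (ξ : Rd d) :
    ‖radialFT d m a ξ‖ ^ 2 = shellProfile m (fun t => a t ^ 2) ‖ξ‖ := by
  simp only [radialFT, shellProfile, Set.indicator_apply, Set.mem_Iic]
  split_ifs <;> simp

lemma quadraticForm_radialFT_bounds (n : ℕ) {s γ c C ε : ℝ} (hγ : 0 ≤ γ)
    {g : ℝ → ℝ → ℝ} (hg : IsAdmissible s γ c C g) (hε : ε ∈ Set.Ioo 0 1) (hm : m ≤ 1 / 2)
    {a : ℝ → ℝ} (ha : Measurable a)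
    (ha_int : IntegrableOn (fun t => a t ^ 2) (Set.Ioo 0 m)) :
    sphereArea (n + 1) * ((1 / 2) ^ n * c * (2 * ∫ t in Set.Ioo 0 m, a t ^ 2 * (ε + t ^ γ))) ≤
        ∫ ξ : Rd (n + 1), ‖radialFT (n + 1) m a ξ‖ ^ 2 * g ε ‖ξ‖ ∧
      ∫ ξ : Rd (n + 1), ‖radialFT (n + 1) m a ξ‖ ^ 2 * g ε ‖ξ‖ ≤
        sphereArea (n + 1) *
          ((3 / 2) ^ n * C * (2 * ∫ t in Set.Ioo 0 m, a t ^ 2 * (ε + t ^ γ))) := by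
  obtain ⟨g_meas, g_pos, -, g_near⟩ := hg
  simp only [norm_radialFT_sq]
  exact integral_shellProfile_norm_mul_bounds n hm (ha.pow_const 2) (fun t => sq_nonneg (a t))
    (g_meas ε hε) (fun r => (g_pos ε hε r).le) (fun r hr => g_near ε hε r (hr.trans hm))
    (integrableOn_mul_add_rpow hγ (by linarith) ε ha_int)

end ShellProfile

section LpLowerBound

lemma sum_rpow_mul_measure_le_eLpNorm_rpow {ι α E : Type*} [MeasurableSpace α] {μ : Measure α}
    [NormedAddCommGroup E] {p : ℝ} (hp : 0 < p) {f : α → E} {s : Finset ι} {S : ι → Set α}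
    (hS : ∀ i ∈ s, MeasurableSet (S i)) (hdisj : (s : Set ι).PairwiseDisjoint S) {l : ι → ℝ≥0∞}
    (hl : ∀ i ∈ s, ∀ x ∈ S i, l i ≤ ‖f x‖ₑ) :
    ∑ i ∈ s, l i ^ p * μ (S i) ≤ eLpNorm f (ENNReal.ofReal p) μ ^ p := by
  have eLpNorm_rpow : eLpNorm f (ENNReal.ofReal p) μ ^ p = ∫⁻ x, ‖f x‖ₑ ^ p ∂μ := by
    rw [eLpNorm_eq_lintegral_rpow_enorm_toReal (by simpa using hp) ENNReal.ofReal_ne_top,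
      ENNReal.toReal_ofReal hp.le, one_div, ENNReal.rpow_inv_rpow hp.ne']
  calc ∑ i ∈ s, l i ^ p * μ (S i)
      = ∑ i ∈ s, ∫⁻ _ in S i, l i ^ p ∂μ := by simp only [setLIntegral_const]
    _ ≤ ∑ i ∈ s, ∫⁻ x in S i, ‖f x‖ₑ ^ p ∂μ := Finset.sum_le_sum fun i hi =>
        setLIntegral_mono' (hS i hi) fun x hx => ENNReal.rpow_le_rpow (hl i hi x hx) hp.le
    _ = ∫⁻ x in ⋃ i ∈ s, S i, ‖f x‖ₑ ^ p ∂μ := (lintegral_biUnion_finset hdisj hS _).symm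
    _ ≤ eLpNorm f (ENNReal.ofReal p) μ ^ p :=
        (setLIntegral_le_lintegral _ _).trans_eq eLpNorm_rpow.symm

lemma ofReal_le_volume_norm_mem_closedBall (n : ℕ) {α ρ h : ℝ} (hα : 0 < α) (hαρ : α ≤ ρ - h) :
    ENNReal.ofReal (sphereArea (n + 1) * (α ^ n * (2 * h))) ≤
      volume ((‖·‖) ⁻¹' Metric.closedBall ρ h : Set (Rd (n + 1))) := by
  have shell_subset : Set.Icc (ρ - h) (ρ + h) ⊆ Set.Ioi 0 := fun r hr =>
    hα.trans_le (hαρ.trans hr.1)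
  rw [← Measure.map_apply measurable_norm measurableSet_closedBall, map_norm_addHaar,
    Measure.smul_apply, withDensity_apply _ measurableSet_closedBall, finrank_euclideanSpace_fin,
    Nat.add_sub_cancel, Real.closedBall_eq_Icc, Measure.restrict_restrict measurableSet_Icc,
    Set.inter_eq_self_of_subset_left shell_subset, smul_eq_mul,
    ENNReal.ofReal_mul (sphereArea_pos n).le, ENNReal.ofReal_mul (by positivity), sphereArea,
    ofReal_measureReal]
  gcongr
  calc ENNReal.ofReal (α ^ n) * ENNReal.ofReal (2 * h)
      = ∫⁻ _ in Set.Icc (ρ - h) (ρ + h), ENNReal.ofReal (α ^ n) := by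
        rw [setLIntegral_const, Real.volume_Icc]
        ring_nf
    _ ≤ ∫⁻ r in Set.Icc (ρ - h) (ρ + h), ENNReal.ofReal (r ^ n) :=
        setLIntegral_mono' measurableSet_Icc fun r hr =>
          ENNReal.ofReal_le_ofReal (pow_le_pow_left₀ hα.le (hαρ.trans hr.1) n)

lemma pairwiseDisjoint_closedBall_of_mem_Icc {s : Set ℕ} {ρ : ℕ → ℝ} {h : ℝ} (hh : h ≤ 1 / 4)
    (hρ : ∀ i ∈ s, ρ i ∈ Set.Icc (2 * (i : ℝ)) (2 * i + 1)) :
    s.PairwiseDisjoint fun i => Metric.closedBall (ρ i) h := by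
  have gap : ∀ i ∈ s, ∀ j ∈ s, i < j → h + h < dist (ρ j) (ρ i) := by
    intro i hi j hj hij
    have : (i : ℝ) + 1 ≤ j := by exact_mod_cast hij
    exact lt_of_lt_of_le (by linarith [(hρ i hi).2, (hρ j hj).1]) (le_abs_self _)
  intro i hi j hj hij
  refine Metric.closedBall_disjoint_closedBall ?_
  rcases hij.lt_or_gt with lt | gt
  · exact dist_comm (ρ i) (ρ j) ▸ gap i hi j hj lt
  · exact gap j hj i hi gt

lemma le_eLpNorm_rpow_of_le_norm_on_shells (n N : ℕ) {p : ℝ} (hp : 0 < p) {E : Type*}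
    [NormedAddCommGroup E] {f : Rd (n + 1) → E} {ρ : ℕ → ℝ} {h : ℝ} (hh : 0 < h)
    (hh_le : h ≤ 1 / 4) (hρ : ∀ i ∈ Finset.Icc 1 N, ρ i ∈ Set.Icc (2 * (i : ℝ)) (2 * i + 1))
    {A β : ℝ} (hA : 0 ≤ A)
    (hf : ∀ i ∈ Finset.Icc 1 N, ∀ x, |‖x‖ - ρ i| ≤ h → A * (i : ℝ) ^ (-β) ≤ ‖f x‖) :
    ENNReal.ofReal
        (A ^ p * (sphereArea (n + 1) * (2 * h)) * ∑ i ∈ Finset.Icc 1 N, (i : ℝ) ^ (n - β * p)) ≤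
      eLpNorm f (ENNReal.ofReal p) volume ^ p := by
  have one_le : ∀ i ∈ Finset.Icc 1 N, (1 : ℝ) ≤ i := fun i hi =>
    Nat.one_le_cast.2 (Finset.mem_Icc.1 hi).1
  have area_pos := sphereArea_pos n
  set S : ℕ → Set (Rd (n + 1)) := fun i => (‖·‖) ⁻¹' Metric.closedBall (ρ i) h
  have S_disjoint : (Finset.Icc 1 N : Set ℕ).PairwiseDisjoint S := fun i hi j hj hij =>
    (pairwiseDisjoint_closedBall_of_mem_Icc hh_le hρ hi hj hij).preimage _
  refine le_trans ?_ (sum_rpow_mul_measure_le_eLpNorm_rpow hp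
    (fun i _ => measurableSet_closedBall.preimage measurable_norm) S_disjoint
    (l := fun i => ENNReal.ofReal (A * (i : ℝ) ^ (-β)))
    fun i hi x hx => (ENNReal.ofReal_le_ofReal (hf i hi x hx)).trans_eq (ofReal_norm _))
  rw [Finset.mul_sum, ENNReal.ofReal_sum_of_nonneg fun i _ => by positivity]
  refine Finset.sum_le_sum fun i hi => ?_
  have i_pos : (0 : ℝ) < i := one_pos.trans_le (one_le i hi)
  have i_le : (i : ℝ) ≤ ρ i - h := by linarith [(hρ i hi).1, one_le i hi]
  calc ENNReal.ofReal (A ^ p * (sphereArea (n + 1) * (2 * h)) * (i : ℝ) ^ (n - β * p))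
      = ENNReal.ofReal (A * (i : ℝ) ^ (-β)) ^ p *
          ENNReal.ofReal (sphereArea (n + 1) * ((i : ℝ) ^ n * (2 * h))) := by
        rw [ENNReal.ofReal_rpow_of_nonneg (by positivity) hp.le,
          ← ENNReal.ofReal_mul (by positivity), mul_rpow hA (by positivity), ← rpow_mul i_pos.le,
          sub_eq_add_neg, rpow_add i_pos, rpow_natCast, neg_mul]
        ring_nf
    _ ≤ ENNReal.ofReal (A * (i : ℝ) ^ (-β)) ^ p * volume (S i) := by
        gcongr
        exact ofReal_le_volume_norm_mem_closedBall n i_pos i_le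

lemma rpow_add_one_le_sum_rpow {e : ℝ} (he : -1 < e) (N : ℕ) :
    (N : ℝ) ^ (e + 1) / (|e| + 1) ≤ ∑ i ∈ Finset.Icc 1 N, (i : ℝ) ^ e := by
  rcases le_total e 0 with nonpos | nonneg
  · calc (N : ℝ) ^ (e + 1) / (|e| + 1) ≤ (N : ℝ) ^ (e + 1) :=
          div_le_self (by positivity) (by linarith [abs_nonneg e])
      _ = ∑ _i ∈ Finset.Icc 1 N, (N : ℝ) ^ e := by
          rw [Finset.sum_const, Nat.card_Icc, Nat.add_sub_cancel, nsmul_eq_mul, mul_comm,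
            rpow_add_one' (Nat.cast_nonneg N) (by linarith)]
      _ ≤ ∑ i ∈ Finset.Icc 1 N, (i : ℝ) ^ e := Finset.sum_le_sum fun i hi => by
          obtain ⟨one_le, le_N⟩ := Finset.mem_Icc.1 hi
          exact rpow_le_rpow_of_nonpos (Nat.cast_pos.2 one_le) (Nat.cast_le.2 le_N) nonpos
  · have monotone : MonotoneOn (fun x : ℝ => x ^ e) (Set.Icc 0 (0 + N)) :=
      (monotoneOn_rpow_Ici_of_exponent_nonneg nonneg).mono Set.Icc_subset_Ici_self
    calc (N : ℝ) ^ (e + 1) / (|e| + 1) = ∫ x in (0 : ℝ)..0 + N, x ^ e := by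
          rw [integral_rpow (.inl he), zero_rpow (by linarith), abs_of_nonneg nonneg, zero_add,
            sub_zero]
      _ ≤ ∑ i ∈ Finset.range N, (0 + (i + 1 : ℕ) : ℝ) ^ e := monotone.integral_le_sum
      _ = ∑ i ∈ Finset.Icc 1 N, (i : ℝ) ^ e := by
          rw [← Finset.Ico_add_one_right_eq_Icc, Finset.sum_Ico_eq_sum_range]
          simp [add_comm]

lemma mul_rpow_le_sum_floor_rpow {e h m : ℝ} (he : -1 < e) (hm : 0 < m) (hmh : m ≤ h) :
    (h / 2) ^ (e + 1) / (|e| + 1) * m ^ (-(e + 1)) ≤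
      ∑ i ∈ Finset.Icc 1 ⌊h / m⌋₊, (i : ℝ) ^ e := by
  have one_le : 1 ≤ h / m := (one_le_div hm).2 hmh
  have one_le_floor : (1 : ℝ) ≤ ⌊h / m⌋₊ := by exact_mod_cast Nat.le_floor (by simpa using one_le)
  have half_le : h / m / 2 ≤ ⌊h / m⌋₊ := by linarith [Nat.lt_floor_add_one (h / m)]
  have hh : 0 < h := hm.trans_le hmh
  calc (h / 2) ^ (e + 1) / (|e| + 1) * m ^ (-(e + 1))
      = (h / m / 2) ^ (e + 1) / (|e| + 1) := by
        rw [div_right_comm h m 2, div_rpow (by positivity) hm.le, rpow_neg hm.le]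
        ring
    _ ≤ (⌊h / m⌋₊ : ℝ) ^ (e + 1) / (|e| + 1) := by gcongr; linarith
    _ ≤ ∑ i ∈ Finset.Icc 1 ⌊h / m⌋₊, (i : ℝ) ^ e := rpow_add_one_le_sum_rpow he _

lemma half_abs_log_le_sum_floor_rpow_neg_one {h m : ℝ} (hh : 0 < h) (hh_le : h ≤ 1) (hm : 0 < m)
    (hmh : m ≤ h ^ 2) :
    1 / 2 * |log m| ≤ ∑ i ∈ Finset.Icc 1 ⌊h / m⌋₊, (i : ℝ) ^ (-1 : ℝ) := by
  have log_le : log m ≤ 2 * log h := by simpa [log_pow] using log_le_log hm hmh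
  have log_h_nonpos : log h ≤ 0 := log_nonpos hh.le hh_le
  calc 1 / 2 * |log m| ≤ log (h / m) := by
        rw [abs_of_nonpos (by linarith), log_div hh.ne' hm.ne']
        linarith
    _ ≤ log (⌊h / m⌋₊ + 1 : ℕ) := by
        refine log_le_log (by positivity) ?_
        push_cast
        exact (Nat.lt_floor_add_one _).le
    _ ≤ harmonic ⌊h / m⌋₊ := log_add_one_le_harmonic _
    _ = ∑ i ∈ Finset.Icc 1 ⌊h / m⌋₊, (i : ℝ) ^ (-1 : ℝ) := by
        simp only [harmonic_eq_sum_Icc, Rat.cast_sum, Rat.cast_inv, Rat.cast_natCast, rpow_neg_one]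

lemma one_le_sum_floor_rpow {h m : ℝ} (hm : 0 < m) (hmh : m ≤ h) (e : ℝ) :
    1 ≤ ∑ i ∈ Finset.Icc 1 ⌊h / m⌋₊, (i : ℝ) ^ e := by
  have one_le_floor : 1 ≤ ⌊h / m⌋₊ := Nat.le_floor (by simpa using (one_le_div hm).2 hmh)
  calc (1 : ℝ) = ((1 : ℕ) : ℝ) ^ e := by simp
    _ ≤ ∑ i ∈ Finset.Icc 1 ⌊h / m⌋₊, (i : ℝ) ^ e :=
        Finset.single_le_sum (f := fun i : ℕ => (i : ℝ) ^ e) (fun i _ => by positivity)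
          (Finset.mem_Icc.2 ⟨le_rfl, one_le_floor⟩)

/-- The factor `F(m)`: for a nonnegative radial profile on the shell of half-width `m`, the `L^p`
norm of its inverse Fourier transform is at least a constant times `F(m)` times its mass. -/
def shellGain (d : ℕ) (p m : ℝ) : ℝ :=
  if p < 2 * (d : ℝ) / ((d : ℝ) - 1) then m ^ (((d : ℝ) - 1) / 2 - (d : ℝ) / p)
  else if p = 2 * (d : ℝ) / ((d : ℝ) - 1) then |log m| ^ (1 / p)
  else 1

lemma shellGain_nonneg {d : ℕ} {p m : ℝ} (hm : 0 ≤ m) : 0 ≤ shellGain d p m := by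
  unfold shellGain
  split_ifs <;> positivity

lemma exists_mul_shellGain_rpow_le_sum (k : ℕ) {p h : ℝ} (hp : 0 < p) (hh : 0 < h)
    (hh_le : h ≤ 1) : ∃ c : ℝ, 0 < c ∧ ∀ m, 0 < m → m ≤ h ^ 2 →
      c * shellGain (k + 2) p m ^ p ≤
        ∑ i ∈ Finset.Icc 1 ⌊h / m⌋₊, (i : ℝ) ^ ((k + 1 : ℕ) - ((k + 1 : ℝ) / 2) * p) := by
  set e : ℝ := (k + 1 : ℕ) - ((k + 1 : ℝ) / 2) * p with he
  have sq_le : h ^ 2 ≤ h := by nlinarith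
  have critical : 2 * ((k + 2 : ℕ) : ℝ) / ((k + 2 : ℕ) - 1) = 2 * (k + 2) / (k + 1) := by
    push_cast
    ring
  have hk : (0 : ℝ) < k + 1 := by positivity
  simp only [shellGain, critical]
  rcases lt_trichotomy p (2 * (k + 2) / (k + 1)) with subcritical | endpoint | supercritical
  · have he_gt : -1 < e := by
      rw [lt_div_iff₀ hk] at subcritical
      rw [he]; push_cast; linarith
    refine ⟨(h / 2) ^ (e + 1) / (|e| + 1), by positivity, fun m hm hmh => ?_⟩
    have exponent : (((k + 2 : ℕ) - 1) / 2 - (k + 2 : ℕ) / p) * p = -(e + 1) := by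
      rw [he]; push_cast; field_simp; ring
    rw [if_pos subcritical, ← rpow_mul hm.le, exponent]
    exact mul_rpow_le_sum_floor_rpow he_gt hm (hmh.trans sq_le)
  · have he_eq : e = -1 := by
      rw [eq_div_iff hk.ne'] at endpoint
      rw [he]; push_cast; linarith
    refine ⟨1 / 2, by norm_num, fun m hm hmh => ?_⟩
    rw [if_neg endpoint.not_lt, if_pos endpoint, one_div p, rpow_inv_rpow (abs_nonneg _) hp.ne',
      he_eq]
    exact half_abs_log_le_sum_floor_rpow_neg_one hh hh_le hm hmh
  · refine ⟨1, one_pos, fun m hm hmh => ?_⟩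
    rw [if_neg supercritical.not_gt, if_neg supercritical.ne', one_rpow, one_mul]
    exact one_le_sum_floor_rpow hm (hmh.trans sq_le) e

lemma exists_mul_shellGain_le_eLpNorm (k : ℕ) {p : ℝ} (hp : 0 < p) :
    ∃ c m₀ : ℝ, 0 < c ∧ 0 < m₀ ∧ m₀ ≤ 1 / 2 ∧ ∀ m, 0 < m → m ≤ m₀ →
      ∀ a : ℝ → ℝ, Measurable a → (∀ t, 0 ≤ a t) → IntegrableOn a (Set.Ioo 0 m) →
        ENNReal.ofReal (c * (∫ t in Set.Ioo 0 m, a t) * shellGain (k + 2) p m) ≤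
          eLpNorm (𝓕⁻ (radialFT (k + 2) m a)) (ENNReal.ofReal p) volume := by
  obtain ⟨b, h, hb, hh, hh_le, bessel_large⟩ := exists_shell_le_abs_besselIntegral k
  choose! ρ hρ le_bessel using bessel_large
  obtain ⟨c, hc, gain_le⟩ := exists_mul_shellGain_rpow_le_sum k hp hh (by linarith)
  set B := sphereArea (k + 1) * ((1 / 2) ^ (k + 1) * b * 2)
  set V := sphereArea (k + 2) * (2 * h)
  have hB : 0 < B := mul_pos (sphereArea_pos k) (by positivity)
  have hV : 0 < V := mul_pos (sphereArea_pos (k + 1)) (by positivity)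
  refine ⟨B * (V * c) ^ p⁻¹, h ^ 2, by positivity, by positivity, by nlinarith, ?_⟩
  intro m hm hmh a ha ha_nonneg ha_int
  set I := ∫ t in Set.Ioo 0 m, a t
  have hI : 0 ≤ I := integral_nonneg ha_nonneg
  have hF := shellGain_nonneg (d := k + 2) (p := p) hm.le
  have le_fourierInv : ∀ i ∈ Finset.Icc 1 ⌊h / m⌋₊, ∀ x : Rd (k + 2), |‖x‖ - ρ i| ≤ h →
      B * I * (i : ℝ) ^ (-((k + 1) / 2 : ℝ)) ≤ ‖𝓕⁻ (radialFT (k + 2) m a) x‖ := by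
    intro i hi x hx
    obtain ⟨one_le, le_floor⟩ := Finset.mem_Icc.1 hi
    have width_le : m * i ≤ h := (le_div_iff₀' hm).1 ((Nat.le_floor_iff (by positivity)).1 le_floor)
    refine le_trans (le_of_eq ?_) (le_norm_fourierInv_radialFT k (by nlinarith) ha ha_nonneg ha_int
      (x := x) (l := b * (i : ℝ) ^ (-((k + 1) / 2 : ℝ))) (by positivity) fun r hr =>
        le_bessel i one_le ‖x‖ r hx (le_trans (by gcongr) width_le))
    ring
  rw [← ENNReal.rpow_le_rpow_iff hp, ENNReal.ofReal_rpow_of_nonneg (by positivity) hp.le]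
  refine le_trans (ENNReal.ofReal_le_ofReal ?_) (le_eLpNorm_rpow_of_le_norm_on_shells (k + 1)
    ⌊h / m⌋₊ hp hh hh_le (fun i hi => hρ i (Finset.mem_Icc.1 hi).1) (by positivity) le_fourierInv)
  calc (B * (V * c) ^ p⁻¹ * I * shellGain (k + 2) p m) ^ p
      = (B * I) ^ p * V * (c * shellGain (k + 2) p m ^ p) := by
        rw [show B * (V * c) ^ p⁻¹ * I * shellGain (k + 2) p m =
            B * I * (V * c) ^ p⁻¹ * shellGain (k + 2) p m by ring,
          mul_rpow (by positivity) hF, mul_rpow (by positivity) (by positivity),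
          rpow_inv_rpow (by positivity) hp.ne']
        ring
    _ ≤ _ := by
        gcongr
        exact gain_le m hm hmh

end LpLowerBound

lemma integrableOn_of_integrableOn_sq {α : Type*} [MeasurableSpace α] {μ : Measure α} {s : Set α}
    {f : α → ℝ} (hs : μ s ≠ ∞) (hf : AEStronglyMeasurable f (μ.restrict s))
    (hf_sq : IntegrableOn (fun x => f x ^ 2) s μ) : IntegrableOn f s μ := by
  have : IsFiniteMeasure (μ.restrict s) := isFiniteMeasure_restrict.2 hs
  exact ((memLp_two_iff_integrable_sq hf).2 hf_sq).integrable one_le_two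

theorem stmt9_general (d : ℕ) (hd : 2 ≤ d) (s γ p c C : ℝ) (hγ : 0 ≤ γ) (hp : 0 < p)
    (hc : 0 < c) :
    ∃ c' C' ε₀ m₀ : ℝ, 0 < c' ∧ c' ≤ C' ∧
      0 < ε₀ ∧ ε₀ ≤ 1 / 2 ∧ 0 < m₀ ∧ m₀ ≤ 1 / 2 ∧
      ∀ g : ℝ → ℝ → ℝ, IsAdmissible s γ c C g →
      ∀ ε m : ℝ, 0 < ε → ε < ε₀ → 0 < m → m ≤ m₀ →
      ∀ a : ℝ → ℝ, Measurable a → (∀ t, 0 ≤ a t) →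
        IntegrableOn (fun t => a t ^ 2) (Set.Ioo 0 m) volume →
        (c' * ∫ t in Set.Ioo 0 m, a t ^ 2 * (ε + t ^ γ)) ≤
            (∫ ξ : Rd d, ‖radialFT d m a ξ‖ ^ 2 * g ε ‖ξ‖) ∧
          (∫ ξ : Rd d, ‖radialFT d m a ξ‖ ^ 2 * g ε ‖ξ‖) ≤
            C' * (∫ t in Set.Ioo 0 m, a t ^ 2 * (ε + t ^ γ)) ∧
          ENNReal.ofReal (c' * (∫ t in Set.Ioo 0 m, a t) * shellGain d p m) ≤
            eLpNorm (𝓕⁻ (radialFT d m a)) (ENNReal.ofReal p) volume := by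
  obtain ⟨k, rfl⟩ := Nat.exists_eq_add_of_le' hd
  obtain ⟨c₂, m₀, hc₂, hm₀, hm₀_le, gain_le⟩ := exists_mul_shellGain_le_eLpNorm k hp
  set c₁ := sphereArea (k + 2) * ((1 / 2) ^ (k + 1) * c * 2)
  set C₁ := sphereArea (k + 2) * ((3 / 2) ^ (k + 1) * C * 2)
  have hc₁ : 0 < c₁ := mul_pos (sphereArea_pos (k + 1)) (by positivity)
  refine ⟨min c₁ c₂, max C₁ (min c₁ c₂), 1 / 2, m₀, lt_min hc₁ hc₂, le_max_right _ _,
    by norm_num, le_rfl, hm₀, hm₀_le, ?_⟩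
  intro g hg ε m hε hε_lt hm hm_le a ha ha_nonneg ha_sq
  obtain ⟨lower, upper⟩ := quadraticForm_radialFT_bounds (k + 1) hγ hg ⟨hε, by linarith⟩
    (hm_le.trans hm₀_le) ha ha_sq
  set Q := ∫ t in Set.Ioo 0 m, a t ^ 2 * (ε + t ^ γ)
  have hQ : 0 ≤ Q := setIntegral_nonneg measurableSet_Ioo fun t ht =>
    mul_nonneg (sq_nonneg _) (add_nonneg hε.le (rpow_nonneg ht.1.le γ))
  have hI : 0 ≤ ∫ t in Set.Ioo 0 m, a t := integral_nonneg ha_nonneg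
  refine ⟨?_, ?_, ?_⟩
  · calc min c₁ c₂ * Q ≤ c₁ * Q := by gcongr; exact min_le_left _ _
      _ = _ := by ring
      _ ≤ _ := lower
  · calc _ ≤ _ := upper
      _ = C₁ * Q := by ring
      _ ≤ max C₁ (min c₁ c₂) * Q := by gcongr; exact le_max_left _ _
  · refine (ENNReal.ofReal_le_ofReal ?_).trans
      (gain_le m hm hm_le a ha ha_nonneg
        (integrableOn_of_integrableOn_sq (by simp) ha.aestronglyMeasurable ha_sq))
    gcongr
    · exact shellGain_nonneg hm.le
    · exact min_le_right _ _

/-- Lemma 2.6: two-sided bounds for `q_ε(v)` and the lower bound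
`‖v‖_p ≥ c' (∫₀^m a) F(m)` for the radial trial function `v = 𝓕⁻¹(radialFT)`, where
`F(m) = m^{(d-1)/2 - d/p}` for `2 < p < 2d/(d-1)`, `F(m) = |log m|^{1/p}` at the endpoint
`p = 2d/(d-1)`, and `F(m) = 1` for larger `p`. -/
theorem stmt9 (d : ℕ) (hd : 2 ≤ d)
    (s γ p c C : ℝ)
    (hs : (d : ℝ) / ((d : ℝ) + 1) < s) (hγ : 1 < γ) (hp : 2 < p)
    (hc : 0 < c) (hcC : c ≤ C) :
    ∃ c' C' ε₀ m₀ : ℝ, 0 < c' ∧ c' ≤ C' ∧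
      0 < ε₀ ∧ ε₀ ≤ 1/2 ∧ 0 < m₀ ∧ m₀ ≤ 1/2 ∧
      ∀ g : ℝ → ℝ → ℝ, IsAdmissible s γ c C g →
      ∀ ε m : ℝ, 0 < ε → ε < ε₀ → 0 < m → m ≤ m₀ →
      ∀ a : ℝ → ℝ, Measurable a → (∀ t, 0 ≤ a t) →
        IntegrableOn (fun t => a t ^ 2) (Set.Ioo 0 m) volume →
        (c' * ∫ t in Set.Ioo (0:ℝ) m, a t ^ 2 * (ε + t ^ γ))
            ≤ (∫ ξ : Rd d, ‖radialFT d m a ξ‖ ^ 2 * g ε ‖ξ‖) ∧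
          (∫ ξ : Rd d, ‖radialFT d m a ξ‖ ^ 2 * g ε ‖ξ‖)
            ≤ C' * (∫ t in Set.Ioo (0:ℝ) m, a t ^ 2 * (ε + t ^ γ)) ∧
          ENNReal.ofReal (c' * (∫ t in Set.Ioo (0:ℝ) m, a t) *
                (if p < 2 * (d : ℝ) / ((d : ℝ) - 1) then m ^ (((d : ℝ) - 1) / 2 - (d : ℝ) / p)
                 else if p = 2 * (d : ℝ) / ((d : ℝ) - 1) then |Real.log m| ^ (1/p)
                 else 1))
            ≤ eLpNorm (𝓕⁻ (radialFT d m a)) (ENNReal.ofReal p) volume :=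
  stmt9_general d hd s γ p c C (by linarith) (by linarith) hc
end
end
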